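/- arXiv:1208.4736 — 2 statements merged into one kernel-verified Lean document; each statement's English description precedes it below -/
import Mathlib

section
/- Let d_1 ≤ d_2 be positive integers with d_1 ≥ 2, let A_1, A_2 > 0, and let S(q) = A_1 e^{−q_1} + A_2 e^{−q_2}, with H the associated Ricci-flat cohomogeneity one Hamiltonian on ℝ²×ℝ². Let F(q,p) = F_{20}(q)p_1² + F_{02}(q)p_2² + F_{11}(q)p_1p_2 + F_1(q)p_1 + F_2(q)p_2 + F_0(q), where all six coefficient functions are C¹ on ℝ², and suppose {F,H} = 0 at every point of V_H. If in addition 4d_1 ≠ d_2(d_1 − 1), then F is a trivial first integral: there exist a C¹ function φ : ℝ² → ℝ and a constant c ∈ ℝ such that F(q,p) = φ(q)·H(q,p) + c for all (q,p) ∈ ℝ²×ℝ². -/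
/-- Partial derivative in the `i`-th `q`-coordinate. -/
noncomputable def pderivQ (F : (Fin 2 → ℝ) → (Fin 2 → ℝ) → ℝ) (i : Fin 2)
    (q p : Fin 2 → ℝ) : ℝ :=
  deriv (fun t => F (Function.update q i t) p) (q i)

/-- Partial derivative in the `i`-th `p`-coordinate. -/
noncomputable def pderivP (F : (Fin 2 → ℝ) → (Fin 2 → ℝ) → ℝ) (i : Fin 2)
    (q p : Fin 2 → ℝ) : ℝ :=
  deriv (fun t => F q (Function.update p i t)) (p i)

/-- Canonical Poisson bracket on `ℝ² × ℝ²`. -/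
noncomputable def poisson (F G : (Fin 2 → ℝ) → (Fin 2 → ℝ) → ℝ) (q p : Fin 2 → ℝ) : ℝ :=
  ∑ i : Fin 2, (pderivQ F i q p * pderivP G i q p - pderivP F i q p * pderivQ G i q p)

/-- Relative volume `v(q) = exp((d₁q₁ + d₂q₂)/2)`. -/
noncomputable def vol (d1 d2 : ℕ) (q : Fin 2 → ℝ) : ℝ :=
  Real.exp (((d1 : ℝ) * q 0 + (d2 : ℝ) * q 1) / 2)

/-- The quadratic form `J(p) = (p₁+p₂)²/(n−1) − p₁²/d₁ − p₂²/d₂`, `n = d₁+d₂`. -/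
noncomputable def Jform (d1 d2 : ℕ) (p : Fin 2 → ℝ) : ℝ :=
  (1 / ((d1 : ℝ) + (d2 : ℝ) - 1)) * (p 0 + p 1) ^ 2 - (p 0) ^ 2 / (d1 : ℝ) -
    (p 1) ^ 2 / (d2 : ℝ)

/-- The Ricci-flat cohomogeneity one Hamiltonian `H(q,p) = v(q)⁻¹ J(p) − S(q) v(q)`. -/
noncomputable def Ham (d1 d2 : ℕ) (S : (Fin 2 → ℝ) → ℝ) (q p : Fin 2 → ℝ) : ℝ :=
  (vol d1 d2 q)⁻¹ * Jform d1 d2 p - S q * vol d1 d2 q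

/-- Real exponentials with distinct rates are linearly independent. -/
lemma exp_coeff_eq_zero {n : ℕ} {x : Fin n → ℝ} (hx : Function.Injective x) {c : Fin n → ℝ}
    (h : ∀ t : ℝ, ∑ i, c i * Real.exp (x i * t) = 0) : c = 0 := by
  let e : Fin n → (Multiplicative ℝ →* ℝ) := fun i =>
    { toFun := fun t => Real.exp (x i * t.toAdd)
      map_one' := by simp
      map_mul' := fun s t => by simp [mul_add, Real.exp_add] }
  have he : Function.Injective e := by
    intro i j hij
    have := DFunLike.congr_fun hij (Multiplicative.ofAdd 1)
    exact hx (by simpa [e] using this)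
  have hli := (linearIndependent_monoidHom (Multiplicative ℝ) ℝ).comp e he
  rw [Fintype.linearIndependent_iff] at hli
  funext i
  refine hli c ?_ i
  funext t
  simpa [e, Finset.sum_apply] using h t.toAdd

/-- A Laurent polynomial with exponents in `[-3, 3]` vanishing on `ℝ \ {0}` is zero. -/
lemma laurent_coeff_eq_zero {a₃ a₂ a₁ a₀ b₁ b₂ b₃ : ℝ}
    (h : ∀ t : ℝ, t ≠ 0 → a₃ * t ^ 3 + a₂ * t ^ 2 + a₁ * t + a₀ + b₁ * t⁻¹ + b₂ * t⁻¹ ^ 2 +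
      b₃ * t⁻¹ ^ 3 = 0) :
    a₃ = 0 ∧ a₂ = 0 ∧ a₁ = 0 ∧ a₀ = 0 ∧ b₁ = 0 ∧ b₂ = 0 ∧ b₃ = 0 := by
  have h1 := h 1 (by norm_num)
  have h2 := h (-1) (by norm_num)
  have h3 := h 2 (by norm_num)
  have h4 := h (-2) (by norm_num)
  have h5 := h 3 (by norm_num)
  have h6 := h (-3) (by norm_num)
  have h7 := h 4 (by norm_num)
  norm_num at h1 h2 h3 h4 h5 h6 h7
  refine ⟨?_, ?_, ?_, ?_, ?_, ?_, ?_⟩ <;> linarith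

/-- If `∑ fᵢ(u) Mᵢ(w) = ∑ gⱼ(w) Nⱼ(u)` with independent `M₁, M₂` and independent `N₁, N₂`,
then both sides are a bilinear expression `∑ Kᵢⱼ Nⱼ(u) Mᵢ(w)`. -/
lemma exists_bilinear_of_separated {f₁ f₂ M₁ M₂ g₁ g₂ N₁ N₂ : ℝ → ℝ}
    (h : ∀ u w, f₁ u * M₁ w + f₂ u * M₂ w = g₁ w * N₁ u + g₂ w * N₂ u)
    {w w' u u' : ℝ} (hM : M₁ w * M₂ w' - M₁ w' * M₂ w ≠ 0)
    (hN : N₁ u * N₂ u' - N₁ u' * N₂ u ≠ 0) :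
    ∃ K₁₁ K₁₂ K₂₁ K₂₂ : ℝ,
      (∀ u, f₁ u = K₁₁ * N₁ u + K₁₂ * N₂ u) ∧ (∀ u, f₂ u = K₂₁ * N₁ u + K₂₂ * N₂ u) ∧
      (∀ w, g₁ w = K₁₁ * M₁ w + K₂₁ * M₂ w) ∧ (∀ w, g₂ w = K₁₂ * M₁ w + K₂₂ * M₂ w) := by
  obtain ⟨K₁₁, K₁₂, hf₁⟩ : ∃ K₁₁ K₁₂ : ℝ, ∀ u, f₁ u = K₁₁ * N₁ u + K₁₂ * N₂ u := by
    refine ⟨(g₁ w * M₂ w' - g₁ w' * M₂ w) / (M₁ w * M₂ w' - M₁ w' * M₂ w),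
      (g₂ w * M₂ w' - g₂ w' * M₂ w) / (M₁ w * M₂ w' - M₁ w' * M₂ w), fun v => ?_⟩
    rw [div_mul_eq_mul_div, div_mul_eq_mul_div, ← add_div, eq_div_iff hM]
    linear_combination M₂ w' * h v w - M₂ w * h v w'
  obtain ⟨K₂₁, K₂₂, hf₂⟩ : ∃ K₂₁ K₂₂ : ℝ, ∀ u, f₂ u = K₂₁ * N₁ u + K₂₂ * N₂ u := by
    refine ⟨(g₁ w' * M₁ w - g₁ w * M₁ w') / (M₁ w * M₂ w' - M₁ w' * M₂ w),
      (g₂ w' * M₁ w - g₂ w * M₁ w') / (M₁ w * M₂ w' - M₁ w' * M₂ w), fun v => ?_⟩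
    rw [div_mul_eq_mul_div, div_mul_eq_mul_div, ← add_div, eq_div_iff hM]
    linear_combination M₁ w * h v w' - M₁ w' * h v w
  refine ⟨K₁₁, K₁₂, K₂₁, K₂₂, hf₁, hf₂, fun z => ?_, fun z => ?_⟩
  · refine mul_left_cancel₀ hN ?_
    have h1 := h u z
    have h2 := h u' z
    rw [hf₁, hf₂] at h1 h2
    linear_combination N₂ u * h2 - N₂ u' * h1
  · refine mul_left_cancel₀ hN ?_
    have h1 := h u z
    have h2 := h u' z
    rw [hf₁, hf₂] at h1 h2
    linear_combination N₁ u' * h1 - N₁ u * h2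

/-- Compatibility of the two equations `f' + mλᵢf = kᵢe^{-λᵢu} + cᵢᵢ + cᵢⱼe^{(λⱼ-λᵢ)u}`. -/
lemma exp_ode_pair {m l₁ l₂ : ℝ} (hm : m ≠ 0) (h1 : l₁ ≠ 0) (h2 : l₂ ≠ 0) (h12 : l₁ ≠ l₂)
    (h21 : l₂ ≠ 2 * l₁) (h12' : l₁ ≠ 2 * l₂) {f f' : ℝ → ℝ} (hf : ∀ u, HasDerivAt f (f' u) u)
    {k₁ k₂ c₁₁ c₁₂ c₂₁ c₂₂ : ℝ}
    (e1 : ∀ u, f' u + m * l₁ * f u =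
      k₁ * Real.exp (-l₁ * u) + c₁₁ + c₁₂ * Real.exp ((l₂ - l₁) * u))
    (e2 : ∀ u, f' u + m * l₂ * f u =
      k₂ * Real.exp (-l₂ * u) + c₂₂ + c₂₁ * Real.exp ((l₁ - l₂) * u)) :
    k₁ * (m * l₂ - l₁) = 0 ∧ k₂ * (m * l₁ - l₂) = 0 ∧ l₁ * c₂₂ = l₂ * c₁₁ ∧
      c₁₂ * ((m + 1) * l₂ - l₁) = 0 ∧ c₂₁ * ((m + 1) * l₁ - l₂) = 0 := by
  have hexp : ∀ κ u : ℝ, HasDerivAt (fun u => Real.exp (κ * u)) (Real.exp (κ * u) * κ) u :=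
    fun κ u => by simpa using ((hasDerivAt_id u).const_mul κ).exp
  have key : ∀ u, (k₁ * (m * l₂ - l₁)) * Real.exp (-l₁ * u)
      - (k₂ * (m * l₁ - l₂)) * Real.exp (-l₂ * u) + m * (l₂ * c₁₁ - l₁ * c₂₂)
      + (c₁₂ * ((m + 1) * l₂ - l₁)) * Real.exp ((l₂ - l₁) * u)
      - (c₂₁ * ((m + 1) * l₁ - l₂)) * Real.exp ((l₁ - l₂) * u) = 0 := by
    intro u
    have hd := (((hexp (-l₂) u).const_mul k₂).add_const c₂₂).add
      ((hexp (l₁ - l₂) u).const_mul c₂₁)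
    have hd' := (((hexp (-l₁) u).const_mul k₁).add_const c₁₁).add
      ((hexp (l₂ - l₁) u).const_mul c₁₂)
    have hfu := (hf u).const_mul (m * (l₂ - l₁))
    have heq := (hd.sub hd').unique (hfu.congr_of_eventuallyEq
      (Filter.Eventually.of_forall fun v => by
        simp only [Pi.sub_apply, Pi.add_apply]
        linear_combination e1 v - e2 v))
    linear_combination -heq - m * l₂ * e1 u + m * l₁ * e2 u
  have hinj : Function.Injective ![-l₁, -l₂, 0, l₂ - l₁, l₁ - l₂] := by
    intro i j hij
    fin_cases i <;> fin_cases j <;> simp at hij ⊢ <;> grind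
  have hc := exp_coeff_eq_zero hinj (c := ![k₁ * (m * l₂ - l₁), -(k₂ * (m * l₁ - l₂)),
    m * (l₂ * c₁₁ - l₁ * c₂₂), c₁₂ * ((m + 1) * l₂ - l₁), -(c₂₁ * ((m + 1) * l₁ - l₂))])
    (fun u => by
      simp [Fin.sum_univ_succ]
      have := key u
      simp only [neg_mul] at this
      linarith)
  have c0 := congrFun hc 0
  have c1 := congrFun hc 1
  have c2 := congrFun hc 2
  have c3 := congrFun hc 3
  have c4 := congrFun hc 4
  simp only [Matrix.cons_val, Pi.zero_apply, neg_eq_zero] at c0 c1 c2 c3 c4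
  refine ⟨c0, c1, ?_, c3, c4⟩
  have := (mul_eq_zero.mp c2).resolve_left hm
  linarith

/-- Nonresonance of two pairs of rates `(l₁, m₁)`, `(l₂, m₂)` of a potential
`A₁e^{l₁u+m₁w} + A₂e^{l₂u+m₂w}` in null coordinates. -/
structure NonresonantRates (l₁ l₂ m₁ m₂ : ℝ) : Prop where
  l₁_ne : l₁ ≠ 0
  l₂_ne : l₂ ≠ 0
  m₁_ne : m₁ ≠ 0
  m₂_ne : m₂ ≠ 0
  l_ne : l₁ ≠ l₂
  m_ne : m₁ ≠ m₂
  l₂_ne_two : l₂ ≠ 2 * l₁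
  l₁_ne_two : l₁ ≠ 2 * l₂
  m₂_ne_two : m₂ ≠ 2 * m₁
  m₁_ne_two : m₁ ≠ 2 * m₂
  det_ne : l₁ * m₂ ≠ l₂ * m₁
  perm_ne : l₁ * m₂ + l₂ * m₁ ≠ 0
  three : ¬ (l₁ = 3 * l₂ ∧ m₂ = 3 * m₁)
  three' : ¬ (l₂ = 3 * l₁ ∧ m₁ = 3 * m₂)

/-- The first-order part of the determining equations has no nonzero solutions. -/
lemma linear_part_eq_zero {l₁ l₂ m₁ m₂ A₁ A₂ : ℝ} (hg : NonresonantRates l₁ l₂ m₁ m₂)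
    (hA₁ : A₁ ≠ 0) (hA₂ : A₂ ≠ 0) {α β α' β' : ℝ → ℝ}
    (hα : ∀ u, HasDerivAt α (α' u) u) (hβ : ∀ w, HasDerivAt β (β' w) w)
    (h : ∀ u w, A₁ * (α' u + l₁ * α u + β' w + m₁ * β w) * (Real.exp (l₁ * u) * Real.exp (m₁ * w)) +
      A₂ * (α' u + l₂ * α u + β' w + m₂ * β w) * (Real.exp (l₂ * u) * Real.exp (m₂ * w)) = 0) :
    (∀ u, α u = 0) ∧ ∀ w, β w = 0 := by
  have hexp : ∀ {x y : ℝ}, x ≠ y → Real.exp (x * 0) * Real.exp (y * 1) -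
      Real.exp (x * 1) * Real.exp (y * 0) ≠ 0 := by
    intro x y hxy
    simp only [mul_zero, mul_one, Real.exp_zero, one_mul, sub_ne_zero]
    exact fun he => hxy (Real.exp_injective he).symm
  obtain ⟨K₁₁, K₁₂, K₂₁, K₂₂, hf₁, hf₂, hg₁, hg₂⟩ := exists_bilinear_of_separated
    (f₁ := fun u => A₁ * (α' u + l₁ * α u) * Real.exp (l₁ * u))
    (f₂ := fun u => A₂ * (α' u + l₂ * α u) * Real.exp (l₂ * u))
    (g₁ := fun w => -A₁ * (β' w + m₁ * β w) * Real.exp (m₁ * w))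
    (g₂ := fun w => -A₂ * (β' w + m₂ * β w) * Real.exp (m₂ * w))
    (M₁ := fun w => Real.exp (m₁ * w)) (M₂ := fun w => Real.exp (m₂ * w))
    (N₁ := fun u => Real.exp (l₁ * u)) (N₂ := fun u => Real.exp (l₂ * u))
    (fun u w => by linear_combination h u w) (hexp hg.m_ne) (hexp hg.l_ne)
  have hdiv : ∀ {A K L x y z t : ℝ}, A ≠ 0 →
      A * z * Real.exp (x * t) = K * Real.exp (x * t) + L * Real.exp (y * t) →
      z = 0 * Real.exp (-x * t) + K / A + L / A * Real.exp ((y - x) * t) := by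
    intro A K L x y z t hA hz
    have hX := Real.exp_ne_zero (x * t)
    rw [sub_mul, Real.exp_sub]
    generalize Real.exp (x * t) = X at hz hX ⊢
    generalize Real.exp (y * t) = Y at hz ⊢
    field_simp
    linear_combination hz
  have ea₁ := fun u => hdiv hA₁ (hf₁ u)
  have ea₂ := fun u => hdiv hA₂ ((hf₂ u).trans (add_comm _ _))
  have eb₁ := fun w => hdiv (neg_ne_zero.mpr hA₁) (hg₁ w)
  have eb₂ := fun w => hdiv (neg_ne_zero.mpr hA₂) ((hg₂ w).trans (add_comm _ _))
  obtain ⟨-, -, ha, ha₁₂, ha₂₁⟩ := exp_ode_pair (m := 1) one_ne_zero hg.l₁_ne hg.l₂_ne hg.l_ne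
    hg.l₂_ne_two hg.l₁_ne_two hα (by simpa only [one_mul] using ea₁)
    (by simpa only [one_mul] using ea₂)
  obtain ⟨-, -, hb, -, -⟩ := exp_ode_pair (m := 1) one_ne_zero hg.m₁_ne hg.m₂_ne hg.m_ne
    hg.m₂_ne_two hg.m₁_ne_two hβ (by simpa only [one_mul] using eb₁)
    (by simpa only [one_mul] using eb₂)
  have hl₁ : (1 + 1) * l₂ - l₁ ≠ 0 := fun h0 => hg.l₁_ne_two (by linarith)
  have hl₂ : (1 + 1) * l₁ - l₂ ≠ 0 := fun h0 => hg.l₂_ne_two (by linarith)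
  have h12 : K₁₂ = 0 := by simpa [hA₁] using (mul_eq_zero.mp ha₁₂).resolve_right hl₁
  have h21 : K₂₁ = 0 := by simpa [hA₂] using (mul_eq_zero.mp ha₂₁).resolve_right hl₂
  field_simp at ha hb
  have h11 : K₁₁ = 0 := by
    have : (l₁ * m₂ - l₂ * m₁) * (A₂ * K₁₁) = 0 := by
      linear_combination m₁ * ha + l₁ * hb
    simpa [sub_ne_zero.mpr hg.det_ne, hA₂] using this
  have h22 : K₂₂ = 0 := by
    subst h11
    simpa [hg.l₁_ne, hA₁] using ha
  subst h11 h12 h21 h22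
  simp only [zero_div, zero_mul, add_zero] at ea₁ ea₂ eb₁ eb₂
  constructor
  · intro u
    have : (l₁ - l₂) * α u = 0 := by linear_combination ea₁ u - ea₂ u
    exact (mul_eq_zero.mp this).resolve_left (sub_ne_zero.mpr hg.l_ne)
  · intro w
    have : (m₁ - m₂) * β w = 0 := by linear_combination eb₁ w - eb₂ w
    exact (mul_eq_zero.mp this).resolve_left (sub_ne_zero.mpr hg.m_ne)

lemma sub_zero_eq_of_hasDerivAt_exp {g : ℝ → ℝ} {x y p r : ℝ} (hx : x ≠ 0) (hy : y ≠ 0)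
    (hg : ∀ t, HasDerivAt g (-(p * Real.exp (x * t) + r * Real.exp (y * t))) t) (t : ℝ) :
    g t - g 0 = -(p * ((Real.exp (x * t) - 1) / x) + r * ((Real.exp (y * t) - 1) / y)) := by
  have hexp : ∀ κ t : ℝ, HasDerivAt (fun t => Real.exp (κ * t)) (Real.exp (κ * t) * κ) t :=
    fun κ t => by simpa using ((hasDerivAt_id t).const_mul κ).exp
  have hd : ∀ s, HasDerivAt (fun t => g t + (p / x * Real.exp (x * t) +
      r / y * Real.exp (y * t))) 0 s := by
    intro s
    refine ((hg s).add (((hexp x s).const_mul (p / x)).add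
      ((hexp y s).const_mul (r / y)))).congr_deriv ?_
    field_simp
    ring
  have := is_const_of_deriv_eq_zero (fun s => (hd s).differentiableAt) (fun s => (hd s).deriv) t 0
  simp only [mul_zero, Real.exp_zero] at this
  linear_combination this

/-- The second-order part of the determining equations has no nonzero solutions. -/
lemma quadratic_part_eq_zero {l₁ l₂ m₁ m₂ A₁ A₂ : ℝ} (hg : NonresonantRates l₁ l₂ m₁ m₂)
    (hA₁ : A₁ ≠ 0) (hA₂ : A₂ ≠ 0) {a b a' b' : ℝ → ℝ} {G : ℝ → ℝ → ℝ}
    (ha : ∀ u, HasDerivAt a (a' u) u) (hb : ∀ w, HasDerivAt b (b' w) w)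
    (hGu : ∀ u w, HasDerivAt (fun u => G u w)
      (-(A₁ * (b' w + 2 * m₁ * b w) * Real.exp (m₁ * w) * Real.exp (l₁ * u) +
        A₂ * (b' w + 2 * m₂ * b w) * Real.exp (m₂ * w) * Real.exp (l₂ * u))) u)
    (hGw : ∀ u w, HasDerivAt (fun w => G u w)
      (-(A₁ * (a' u + 2 * l₁ * a u) * Real.exp (l₁ * u) * Real.exp (m₁ * w) +
        A₂ * (a' u + 2 * l₂ * a u) * Real.exp (l₂ * u) * Real.exp (m₂ * w))) w) :
    (∀ u, a u = 0) ∧ ∀ w, b w = 0 := by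
  have hexp : ∀ {x y : ℝ}, x ≠ 0 → y ≠ 0 → x ≠ y →
      (Real.exp (x * 1) - 1) / x * ((Real.exp (y * 2) - 1) / y) -
      (Real.exp (x * 2) - 1) / x * ((Real.exp (y * 1) - 1) / y) ≠ 0 := by
    intro x y hx hy hxy
    have h1 : ∀ z : ℝ, Real.exp (z * 2) = Real.exp z ^ 2 := fun z => by
      rw [← Real.exp_nat_mul]; congr 1; push_cast; ring
    have h2 : (Real.exp (x * 1) - 1) / x * ((Real.exp (y * 2) - 1) / y) -
      (Real.exp (x * 2) - 1) / x * ((Real.exp (y * 1) - 1) / y) =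
      (Real.exp x - 1) * (Real.exp y - 1) * (Real.exp y - Real.exp x) / (x * y) := by
      rw [h1, h1, mul_one, mul_one]; field_simp; ring
    rw [h2]
    have hx1 : Real.exp x - 1 ≠ 0 := by simpa [sub_eq_zero] using hx
    have hy1 : Real.exp y - 1 ≠ 0 := by simpa [sub_eq_zero] using hy
    have hxy1 : Real.exp y - Real.exp x ≠ 0 := by simpa [sub_eq_zero] using hxy.symm
    positivity
  set fa₁ : ℝ → ℝ := fun u => A₁ * (a' u + 2 * l₁ * a u) * Real.exp (l₁ * u) with hfa₁
  set fa₂ : ℝ → ℝ := fun u => A₂ * (a' u + 2 * l₂ * a u) * Real.exp (l₂ * u) with hfa₂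
  set fb₁ : ℝ → ℝ := fun w => A₁ * (b' w + 2 * m₁ * b w) * Real.exp (m₁ * w) with hfb₁
  set fb₂ : ℝ → ℝ := fun w => A₂ * (b' w + 2 * m₂ * b w) * Real.exp (m₂ * w) with hfb₂
  obtain ⟨K₁₁, K₁₂, K₂₁, K₂₂, hf₁, hf₂, hg₁, hg₂⟩ := exists_bilinear_of_separated
    (f₁ := fun u => fa₁ u - fa₁ 0) (f₂ := fun u => fa₂ u - fa₂ 0)
    (g₁ := fun w => fb₁ w - fb₁ 0) (g₂ := fun w => fb₂ w - fb₂ 0)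
    (M₁ := fun w => (Real.exp (m₁ * w) - 1) / m₁) (M₂ := fun w => (Real.exp (m₂ * w) - 1) / m₂)
    (N₁ := fun u => (Real.exp (l₁ * u) - 1) / l₁) (N₂ := fun u => (Real.exp (l₂ * u) - 1) / l₂)
    (fun u w => by
      have hu := sub_zero_eq_of_hasDerivAt_exp hg.l₁_ne hg.l₂_ne (fun t => hGu t w) u
      have hu0 := sub_zero_eq_of_hasDerivAt_exp hg.l₁_ne hg.l₂_ne (fun t => hGu t 0) u
      have hw := sub_zero_eq_of_hasDerivAt_exp hg.m₁_ne hg.m₂_ne (fun t => hGw u t) w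
      have hw0 := sub_zero_eq_of_hasDerivAt_exp hg.m₁_ne hg.m₂_ne (fun t => hGw 0 t) w
      linear_combination hw - hw0 - hu + hu0)
    (hexp hg.m₁_ne hg.m₂_ne hg.m_ne) (hexp hg.l₁_ne hg.l₂_ne hg.l_ne)
  have hdiv : ∀ {A K L x y z t c : ℝ}, A ≠ 0 → x ≠ 0 → y ≠ 0 →
      A * z * Real.exp (x * t) - c =
        K * ((Real.exp (x * t) - 1) / x) + L * ((Real.exp (y * t) - 1) / y) →
      z = (c - K / x - L / y) / A * Real.exp (-x * t) + K / (x * A) +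
        L / (y * A) * Real.exp ((y - x) * t) := by
    intro A K L x y z t c hA hx hy hz
    rw [sub_mul, Real.exp_sub, neg_mul, Real.exp_neg]
    field_simp at hz ⊢
    linear_combination hz
  have ea₁ := fun u => hdiv hA₁ hg.l₁_ne hg.l₂_ne (hf₁ u)
  have ea₂ := fun u => hdiv hA₂ hg.l₂_ne hg.l₁_ne ((hf₂ u).trans (add_comm _ _))
  have eb₁ := fun w => hdiv hA₁ hg.m₁_ne hg.m₂_ne (hg₁ w)
  have eb₂ := fun w => hdiv hA₂ hg.m₂_ne hg.m₁_ne ((hg₂ w).trans (add_comm _ _))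
  obtain ⟨ka₁, ka₂, hac, ha₁₂, ha₂₁⟩ := exp_ode_pair two_ne_zero hg.l₁_ne hg.l₂_ne hg.l_ne
    hg.l₂_ne_two hg.l₁_ne_two ha ea₁ ea₂
  obtain ⟨kb₁, kb₂, hbc, hb₁₂, hb₂₁⟩ := exp_ode_pair two_ne_zero hg.m₁_ne hg.m₂_ne hg.m_ne
    hg.m₂_ne_two hg.m₁_ne_two hb eb₁ eb₂
  replace ka₁ := (mul_eq_zero.mp ka₁).resolve_right fun h0 => hg.l₁_ne_two (by linarith)
  replace ka₂ := (mul_eq_zero.mp ka₂).resolve_right fun h0 => hg.l₂_ne_two (by linarith)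
  replace kb₁ := (mul_eq_zero.mp kb₁).resolve_right fun h0 => hg.m₁_ne_two (by linarith)
  replace kb₂ := (mul_eq_zero.mp kb₂).resolve_right fun h0 => hg.m₂_ne_two (by linarith)
  have hl₁ := hg.l₁_ne
  have hl₂ := hg.l₂_ne
  have hm₁ := hg.m₁_ne
  have hm₂ := hg.m₂_ne
  have h12 : K₁₂ = 0 := by
    by_contra hK
    have h1 := (mul_eq_zero.mp ha₁₂).resolve_left (by positivity)
    have h2 := (mul_eq_zero.mp hb₂₁).resolve_left (by positivity)
    exact hg.three ⟨by linarith, by linarith⟩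
  have h21 : K₂₁ = 0 := by
    by_contra hK
    have h1 := (mul_eq_zero.mp ha₂₁).resolve_left (by positivity)
    have h2 := (mul_eq_zero.mp hb₁₂).resolve_left (by positivity)
    exact hg.three' ⟨by linarith, by linarith⟩
  field_simp at hac hbc
  have h11 : K₁₁ = 0 := by
    have : (l₁ * m₂ - l₂ * m₁) * ((l₁ * m₂ + l₂ * m₁) * (A₂ * K₁₁)) = 0 := by
      linear_combination m₁ ^ 2 * hac - l₁ ^ 2 * hbc
    simpa [sub_ne_zero.mpr hg.det_ne, hg.perm_ne, hA₂] using this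
  have h22 : K₂₂ = 0 := by
    subst h11
    simpa [hl₁, hA₁] using hac
  simp only [ka₁, ka₂, kb₁, kb₂] at ea₁ ea₂ eb₁ eb₂
  subst h11 h12 h21 h22
  simp only [zero_div, zero_mul, add_zero] at ea₁ ea₂ eb₁ eb₂
  constructor
  · intro u
    have : (l₁ - l₂) * a u = 0 := by linear_combination (ea₁ u - ea₂ u) / 2
    exact (mul_eq_zero.mp this).resolve_left (sub_ne_zero.mpr hg.l_ne)
  · intro w
    have : (m₁ - m₂) * b w = 0 := by linear_combination (eb₁ w - eb₂ w) / 2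
    exact (mul_eq_zero.mp this).resolve_left (sub_ne_zero.mpr hg.m_ne)

/-- `f` has partial derivatives `fu` and `fw` everywhere. -/
def HasPartials (f fu fw : ℝ → ℝ → ℝ) : Prop :=
  (∀ u w, HasDerivAt (fun s => f s w) (fu u w) u) ∧ ∀ u w, HasDerivAt (fun s => f u s) (fw u w) w

lemma HasPartials.eq_of_left_zero {f fu fw : ℝ → ℝ → ℝ} (hf : HasPartials f fu fw)
    (h0 : ∀ u w, fu u w = 0) (u w : ℝ) : f u w = f 0 w :=
  is_const_of_deriv_eq_zero (fun s => (hf.1 s w).differentiableAt)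
    (fun s => (hf.1 s w).deriv.trans (h0 s w)) u 0

lemma HasPartials.eq_of_right_zero {f fu fw : ℝ → ℝ → ℝ} (hf : HasPartials f fu fw)
    (h0 : ∀ u w, fw u w = 0) (u w : ℝ) : f u w = f u 0 :=
  is_const_of_deriv_eq_zero (fun s => (hf.2 u s).differentiableAt)
    (fun s => (hf.2 u s).deriv.trans (h0 u s)) w 0

/-- Quadratic first integrals on the level `xy = W` are trivial, in null coordinates. -/
theorem trivial_of_null_coordinates {l₁ l₂ m₁ m₂ A₁ A₂ : ℝ}
    (hg : NonresonantRates l₁ l₂ m₁ m₂) (hA₁ : A₁ < 0) (hA₂ : A₂ < 0)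
    {a au aw b bu bw h hu hw α αu αw β βu βw γ γu γw W Wu Ww : ℝ → ℝ → ℝ}
    (hW : ∀ u w, W u w = A₁ * (Real.exp (l₁ * u) * Real.exp (m₁ * w)) +
      A₂ * (Real.exp (l₂ * u) * Real.exp (m₂ * w)))
    (hWu : ∀ u w, Wu u w = l₁ * A₁ * (Real.exp (l₁ * u) * Real.exp (m₁ * w)) +
      l₂ * A₂ * (Real.exp (l₂ * u) * Real.exp (m₂ * w)))
    (hWw : ∀ u w, Ww u w = m₁ * A₁ * (Real.exp (l₁ * u) * Real.exp (m₁ * w)) +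
      m₂ * A₂ * (Real.exp (l₂ * u) * Real.exp (m₂ * w)))
    (ha : HasPartials a au aw) (hb : HasPartials b bu bw) (hh : HasPartials h hu hw)
    (hα : HasPartials α αu αw) (hβ : HasPartials β βu βw) (hγ : HasPartials γ γu γw)
    (hid : ∀ u w x y, x * y = W u w →
      (au u w * x ^ 2 + bu u w * y ^ 2 + hu u w * x * y + αu u w * x + βu u w * y + γu u w) * y +
      (aw u w * x ^ 2 + bw u w * y ^ 2 + hw u w * x * y + αw u w * x + βw u w * y + γw u w) * x +
      (2 * a u w * x + h u w * y + α u w) * Wu u w +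
      (2 * b u w * y + h u w * x + β u w) * Ww u w = 0) :
    ∃ c : ℝ, ∀ u w x y, a u w * x ^ 2 + b u w * y ^ 2 + h u w * x * y + α u w * x + β u w * y +
      γ u w = h u w * (x * y - W u w) + c := by
  have hW0 : ∀ u w, W u w ≠ 0 := fun u w => by
    rw [hW]
    have h1 := mul_pos (Real.exp_pos (l₁ * u)) (Real.exp_pos (m₁ * w))
    have h2 := mul_pos (Real.exp_pos (l₂ * u)) (Real.exp_pos (m₂ * w))
    exact (add_neg (mul_neg_of_neg_of_pos hA₁ h1) (mul_neg_of_neg_of_pos hA₂ h2)).ne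
  have hexp : ∀ κ u : ℝ, HasDerivAt (fun u => Real.exp (κ * u)) (Real.exp (κ * u) * κ) u :=
    fun κ u => by simpa using ((hasDerivAt_id u).const_mul κ).exp
  have hWp : HasPartials W Wu Ww := by
    constructor
    · intro u w
      refine ((((hexp l₁ u).mul_const _).const_mul A₁).add
        (((hexp l₂ u).mul_const _).const_mul A₂)).congr_deriv (f' := _) ?_
        |>.congr_of_eventuallyEq (Filter.Eventually.of_forall fun s => hW s w)
      rw [hWu]; ring
    · intro u w
      refine ((((hexp m₁ w).const_mul _).const_mul A₁).add
        (((hexp m₂ w).const_mul _).const_mul A₂)).congr_deriv (f' := _) ?_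
        |>.congr_of_eventuallyEq (Filter.Eventually.of_forall fun s => hW u s)
      rw [hWw]; ring
  have hcoeff : ∀ u w, aw u w = 0 ∧ αw u w = 0 ∧
      W u w * au u w + W u w * hw u w + γw u w + 2 * a u w * Wu u w + h u w * Ww u w = 0 ∧
      W u w * αu u w + W u w * βw u w + α u w * Wu u w + β u w * Ww u w = 0 ∧
      W u w * (W u w * bw u w + W u w * hu u w + γu u w + 2 * b u w * Ww u w
        + h u w * Wu u w) = 0 ∧
      W u w ^ 2 * βu u w = 0 ∧ W u w ^ 3 * bu u w = 0 := by
    intro u w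
    refine laurent_coeff_eq_zero fun t ht => ?_
    have := hid u w t (W u w * t⁻¹) (by field_simp)
    field_simp at this ⊢
    linear_combination this
  have haw := ha.eq_of_right_zero fun u w => (hcoeff u w).1
  have hαw := hα.eq_of_right_zero fun u w => (hcoeff u w).2.1
  have hβu := hβ.eq_of_left_zero fun u w =>
    (mul_eq_zero.mp (hcoeff u w).2.2.2.2.2.1).resolve_left (pow_ne_zero _ (hW0 u w))
  have hbu := hb.eq_of_left_zero fun u w =>
    (mul_eq_zero.mp (hcoeff u w).2.2.2.2.2.2).resolve_left (pow_ne_zero _ (hW0 u w))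
  have hau : ∀ u w, au u w = au u 0 := fun u w =>
    (ha.1 u w).unique (by simpa only [haw _ w] using ha.1 u 0)
  have hαu : ∀ u w, αu u w = αu u 0 := fun u w =>
    (hα.1 u w).unique (by simpa only [hαw _ w] using hα.1 u 0)
  have hbw : ∀ u w, bw u w = bw 0 w := fun u w =>
    (hb.2 u w).unique (by simpa only [hbu u] using hb.2 0 w)
  have hβw : ∀ u w, βw u w = βw 0 w := fun u w =>
    (hβ.2 u w).unique (by simpa only [hβu u] using hβ.2 0 w)
  obtain ⟨hα0, hβ0⟩ := linear_part_eq_zero hg hA₁.ne hA₂.ne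
    (fun u => hα.1 u 0) (fun w => hβ.2 0 w) (fun u w => by
      have := (hcoeff u w).2.2.2.1
      rw [hW, hWu, hWw, hαu, hβw, hαw, hβu] at this
      linear_combination this)
  have hGu : ∀ u w, γu u w + (hu u w * W u w + h u w * Wu u w) =
      -(bw 0 w * W u w + 2 * b 0 w * Ww u w) := fun u w => by
    have := (mul_eq_zero.mp (hcoeff u w).2.2.2.2.1).resolve_left (hW0 u w)
    rw [hbw, hbu] at this
    linear_combination this
  have hGw : ∀ u w, γw u w + (hw u w * W u w + h u w * Ww u w) =
      -(au u 0 * W u w + 2 * a u 0 * Wu u w) := fun u w => by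
    have := (hcoeff u w).2.2.1
    rw [hau, haw] at this
    linear_combination this
  have hG : HasPartials (fun u w => γ u w + h u w * W u w)
      (fun u w => -(bw 0 w * W u w + 2 * b 0 w * Ww u w))
      (fun u w => -(au u 0 * W u w + 2 * a u 0 * Wu u w)) :=
    ⟨fun u w => ((hγ.1 u w).add ((hh.1 u w).mul (hWp.1 u w))).congr_deriv (hGu u w),
      fun u w => ((hγ.2 u w).add ((hh.2 u w).mul (hWp.2 u w))).congr_deriv (hGw u w)⟩
  obtain ⟨ha0, hb0⟩ := quadratic_part_eq_zero hg hA₁.ne hA₂.ne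
    (fun u => ha.1 u 0) (fun w => hb.2 0 w) (G := fun u w => γ u w + h u w * W u w)
    (fun u w => (hG.1 u w).congr_deriv (by simp only [hW, hWw]; ring))
    (fun u w => (hG.2 u w).congr_deriv (by simp only [hW, hWu]; ring))
  have hau0 : ∀ u, au u 0 = 0 := fun u =>
    (ha.1 u 0).unique (by simpa only [ha0] using hasDerivAt_const u (0 : ℝ))
  have hbw0 : ∀ w, bw 0 w = 0 := fun w =>
    (hb.2 0 w).unique (by simpa only [hb0] using hasDerivAt_const w (0 : ℝ))
  refine ⟨γ 0 0 + h 0 0 * W 0 0, fun u w x y => ?_⟩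
  have h1 := hG.eq_of_left_zero (fun u w => by rw [hbw0, hb0]; ring) u w
  have h2 := hG.eq_of_right_zero (fun u w => by rw [hau0, ha0]; ring) 0 w
  rw [haw, ha0, hbu, hb0, hαw, hα0, hβu, hβ0]
  linear_combination h1 + h2

/-- Null directions of `Jform`. -/
lemma exists_null_directions {x y : ℝ} (hx : 2 ≤ x) (hy : 2 ≤ y) :
    ∃ ρ σ : ℝ, ρ ≠ σ ∧ ρ + σ = 2 * x / (y - 1) ∧ ρ * σ = (x - 1) * x / (y * (y - 1)) := by
  have hy1 : 0 < y - 1 := by linarith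
  have hpos : 0 < x * (x + y - 1) / y := by
    have : 0 < x + y - 1 := by linarith
    positivity
  have hsq := Real.sq_sqrt hpos.le
  have hθ := Real.sqrt_pos.mpr hpos
  set θ := Real.sqrt (x * (x + y - 1) / y)
  refine ⟨(x + θ) / (y - 1), (x - θ) / (y - 1), ?_, ?_, ?_⟩
  · intro h
    field_simp at h
    linarith
  · field_simp
    ring
  · have : (x + θ) / (y - 1) * ((x - θ) / (y - 1)) = (x ^ 2 - θ ^ 2) / (y - 1) ^ 2 := by
      field_simp
      ring
    rw [this, hsq]
    have : y ≠ 0 := by linarith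
    field_simp
    ring

/-- In null coordinates the rates of the two exponentials of `S v²` are nonresonant. -/
lemma nonresonantRates_of_null_directions {d1 d2 : ℕ} (hd1 : 2 ≤ d1) (hle : d1 ≤ d2)
    (hne : 4 * (d1 : ℝ) ≠ (d2 : ℝ) * ((d1 : ℝ) - 1)) {ρ σ : ℝ} (hρσ : ρ ≠ σ)
    (hsum : ρ + σ = 2 * d1 / ((d2 : ℝ) - 1))
    (hprod : ρ * σ = ((d1 : ℝ) - 1) * d1 / (d2 * ((d2 : ℝ) - 1))) :
    NonresonantRates (d1 - 1 - ρ * d2) (d1 - ρ * (d2 - 1)) (d1 - 1 - σ * d2)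
      (d1 - σ * (d2 - 1)) := by
  have hne' : d1 * d2 ≠ d2 + 4 * d1 := by
    intro h
    apply hne
    have : (d1 : ℝ) * d2 = d2 + 4 * d1 := by exact_mod_cast h
    linarith
  have hne'' : d1 * d2 ≠ d1 + 4 * d2 := by
    intro h
    have h1 : d1 ≤ 5 := by nlinarith
    interval_cases d1 <;> omega
  have hne₁ : (d1 : ℝ) * d2 ≠ d2 + 4 * d1 := by exact_mod_cast hne'
  have hne₂ : (d1 : ℝ) * d2 ≠ d1 + 4 * d2 := by exact_mod_cast hne''
  have hx : (2 : ℝ) ≤ d1 := by exact_mod_cast hd1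
  have hxy : (d1 : ℝ) ≤ d2 := by exact_mod_cast hle
  have hthree : ¬ ((d1 : ℝ) = d2 ∧ 2 * (d1 : ℝ) = 5) := by
    rintro ⟨-, h⟩
    have : 2 * d1 = 5 := by exact_mod_cast h
    omega
  generalize (d1 : ℝ) = x at *
  generalize (d2 : ℝ) = y at *
  have hx0 : 0 < x := by linarith
  have hy0 : 0 < y := by linarith
  have hx1 : 0 < x - 1 := by linarith
  have hy1 : 0 < y - 1 := by linarith
  have hn : 0 < x + y - 1 := by linarith
  obtain ⟨N, hN⟩ : ∃ N, N = -((x + y - 1) / (y - 1)) := ⟨_, rfl⟩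
  have hN0 : N < 0 := by rw [hN]; exact neg_neg_of_pos (by positivity)
  have h11 : (x - 1 - ρ * y) * (x - 1 - σ * y) = N * (x - 1) := by
    have : (x - 1 - ρ * y) * (x - 1 - σ * y) =
      (x - 1) ^ 2 - (x - 1) * y * (ρ + σ) + y ^ 2 * (ρ * σ) := by ring
    rw [this, hsum, hprod, hN]
    field_simp
    ring
  have h22 : (x - ρ * (y - 1)) * (x - σ * (y - 1)) * y = N * x * (y - 1) := by
    have : (x - ρ * (y - 1)) * (x - σ * (y - 1)) * y =
      (x ^ 2 - x * (y - 1) * (ρ + σ) + (y - 1) ^ 2 * (ρ * σ)) * y := by ring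
    rw [this, hsum, hprod, hN]
    field_simp
    ring
  have h12 : (x - 1 - ρ * y) * (x - σ * (y - 1)) + (x - ρ * (y - 1)) * (x - 1 - σ * y) =
      2 * N * x := by
    have : (x - 1 - ρ * y) * (x - σ * (y - 1)) + (x - ρ * (y - 1)) * (x - 1 - σ * y) =
      2 * (x - 1) * x - ((x - 1) * (y - 1) + x * y) * (ρ + σ) + 2 * y * (y - 1) * (ρ * σ) := by
      ring
    rw [this, hsum, hprod, hN]
    field_simp
    ring
  have hdet : (x - 1 - ρ * y) * (x - σ * (y - 1)) ≠ (x - ρ * (y - 1)) * (x - 1 - σ * y) := by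
    intro h
    have : (x + y - 1) * (ρ - σ) = 0 := by linear_combination -h
    simp [hn.ne', sub_ne_zero.mpr hρσ] at this
  generalize x - 1 - ρ * y = l₁ at *
  generalize x - 1 - σ * y = m₁ at *
  generalize x - ρ * (y - 1) = l₂ at *
  generalize x - σ * (y - 1) = m₂ at *
  have hlm₁ : l₁ * m₁ ≠ 0 := by rw [h11]; exact mul_ne_zero hN0.ne hx1.ne'
  have hlm₂ : l₂ * m₂ ≠ 0 := fun h0 => by
    rw [h0, zero_mul] at h22
    exact mul_ne_zero (mul_ne_zero hN0.ne hx0.ne') hy1.ne' h22.symm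
  -- A common ratio of the rates is excluded by the Gram matrix of the two covectors.
  have key : ∀ {l₁ l₂ m₁ m₂ : ℝ}, l₁ * m₁ = N * (x - 1) → l₂ * m₂ * y = N * x * (y - 1) →
      l₁ * m₂ + l₂ * m₁ = 2 * N * x → l₁ ≠ l₂ ∧ l₂ ≠ 2 * l₁ ∧ l₁ ≠ 2 * l₂ ∧
      ¬ (l₁ = 3 * l₂ ∧ m₂ = 3 * m₁) := by
    intro l₁ l₂ m₁ m₂ h11 h22 h12
    refine ⟨?_, ?_, ?_, ?_⟩
    · rintro rfl
      have : N * (x + y) = 0 := by linear_combination h22 + y * h11 - y * h12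
      exact mul_ne_zero hN0.ne (by positivity) this
    · rintro rfl
      have : N * (x * y - x - 4 * y) = 0 := by
        linear_combination 2 * y * h12 - h22 - 4 * y * h11
      rcases mul_eq_zero.mp this with h | h
      · exact hN0.ne h
      · exact hne₂ (by linarith)
    · rintro rfl
      have : N * (x * y - y - 4 * x) = 0 := by
        linear_combination 2 * y * h12 - 4 * h22 - y * h11
      rcases mul_eq_zero.mp this with h | h
      · exact hN0.ne h
      · exact hne₁ (by linarith)
    · rintro ⟨rfl, rfl⟩
      have hxy' : N * (x - y) = 0 := by linear_combination h22 - y * h11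
      have hx5 : N * (5 - 2 * x) = 0 := by linear_combination (10 * h11 - 3 * h12) / 2
      refine hthree ⟨?_, ?_⟩
      · have := (mul_eq_zero.mp hxy').resolve_left hN0.ne
        linarith
      · have := (mul_eq_zero.mp hx5).resolve_left hN0.ne
        linarith
  obtain ⟨k1, k2, k3, k4⟩ := key h11 h22 h12
  obtain ⟨k1', k2', k3', k4'⟩ := key (l₁ := m₁) (l₂ := m₂) (m₁ := l₁) (m₂ := l₂)
    (by linarith) (by linarith) (by linarith)
  exact ⟨left_ne_zero_of_mul hlm₁, left_ne_zero_of_mul hlm₂, right_ne_zero_of_mul hlm₁,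
    right_ne_zero_of_mul hlm₂, k1, k1', k2, k3, k2', k3', hdet,
    by rw [h12]; exact mul_ne_zero (mul_ne_zero two_ne_zero hN0.ne) hx0.ne', k4,
    fun h => k4' ⟨h.2, h.1⟩⟩

/-- The `i`-th partial derivative of `f` on `ℝ²`. -/
noncomputable def partialDeriv (f : (Fin 2 → ℝ) → ℝ) (i : Fin 2) (q : Fin 2 → ℝ) : ℝ :=
  fderiv ℝ f q (Pi.single i 1)

lemma hasDerivAt_comp_update {f : (Fin 2 → ℝ) → ℝ} (hf : ContDiff ℝ 1 f) (i : Fin 2)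
    (q : Fin 2 → ℝ) :
    HasDerivAt (fun t => f (Function.update q i t)) (partialDeriv f i q) (q i) := by
  have hq : HasFDerivAt f (fderiv ℝ f q) (Function.update q i (q i)) := by
    rw [Function.update_eq_self]
    exact (hf.differentiable one_ne_zero q).hasFDerivAt
  exact hq.comp_hasDerivAt (q i) (hasDerivAt_update q i (q i))

lemma hasPartials_comp_linear {f : (Fin 2 → ℝ) → ℝ} (hf : ContDiff ℝ 1 f) (ρ σ : ℝ) :
    HasPartials (fun u w => f ![u + w, -ρ * u - σ * w])
      (fun u w => partialDeriv f 0 ![u + w, -ρ * u - σ * w] -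
        ρ * partialDeriv f 1 ![u + w, -ρ * u - σ * w])
      (fun u w => partialDeriv f 0 ![u + w, -ρ * u - σ * w] -
        σ * partialDeriv f 1 ![u + w, -ρ * u - σ * w]) := by
  have key : ∀ (κ : ℝ) (q : Fin 2 → ℝ) (c : ℝ → Fin 2 → ℝ) (s : ℝ), c s = q →
      HasDerivAt c ![1, -κ] s →
      HasDerivAt (fun t => f (c t)) (partialDeriv f 0 q - κ * partialDeriv f 1 q) s := by
    rintro κ q c s rfl hc
    have h := (hf.differentiable one_ne_zero (c s)).hasFDerivAt.comp_hasDerivAt s hc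
    refine h.congr_deriv ?_
    have hv : (![1, -κ] : Fin 2 → ℝ) = Pi.single 0 1 + (-κ) • Pi.single 1 1 := by
      ext i; fin_cases i <;> simp
    rw [hv, map_add, map_smul, smul_eq_mul]
    simp only [partialDeriv]
    ring
  constructor
  · intro u w
    refine key ρ _ (fun t => ![t + w, -ρ * t - σ * w]) u rfl (hasDerivAt_pi.2 fun i => ?_)
    fin_cases i
    · simpa using (hasDerivAt_id u).add_const w
    · simpa using ((hasDerivAt_id u).const_mul (-ρ)).sub_const (σ * w)
  · intro u w
    refine key σ _ (fun t => ![u + t, -ρ * u - σ * t]) w rfl (hasDerivAt_pi.2 fun i => ?_)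
    fin_cases i
    · simpa using (hasDerivAt_id w).const_add u
    · simpa using ((hasDerivAt_id w).const_mul σ).const_sub (-ρ * u)

lemma HasPartials.add {f fu fw g gu gw : ℝ → ℝ → ℝ} (hf : HasPartials f fu fw)
    (hg : HasPartials g gu gw) : HasPartials (fun u w => f u w + g u w)
      (fun u w => fu u w + gu u w) (fun u w => fw u w + gw u w) :=
  ⟨fun u w => (hf.1 u w).add (hg.1 u w), fun u w => (hf.2 u w).add (hg.2 u w)⟩

lemma HasPartials.const_mul {f fu fw : ℝ → ℝ → ℝ} (c : ℝ) (hf : HasPartials f fu fw) :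
    HasPartials (fun u w => c * f u w) (fun u w => c * fu u w) (fun u w => c * fw u w) :=
  ⟨fun u w => (hf.1 u w).const_mul c, fun u w => (hf.2 u w).const_mul c⟩

lemma hasDerivAt_exp_half (x y t : ℝ) :
    HasDerivAt (fun t => Real.exp ((x * t + y) / 2)) (x / 2 * Real.exp ((x * t + y) / 2)) t := by
  refine ((((hasDerivAt_id t).const_mul x).add_const y).div_const 2).exp.congr_deriv ?_
  simp only [id]
  ring

lemma pderivQ_Ham_zero (d1 d2 : ℕ) (A1 A2 : ℝ) (q p : Fin 2 → ℝ) :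
    pderivQ (Ham d1 d2 fun q => A1 * Real.exp (-(q 0)) + A2 * Real.exp (-(q 1))) 0 q p =
      -(d1 / 2 * (vol d1 d2 q)⁻¹ * Jform d1 d2 p) -
        (d1 / 2 * (A1 * Real.exp (-(q 0)) + A2 * Real.exp (-(q 1))) -
          A1 * Real.exp (-(q 0))) * vol d1 d2 q := by
  have hv := hasDerivAt_exp_half d1 (d2 * q 1) (q 0)
  have hs : HasDerivAt (fun t => A1 * Real.exp (-t) + A2 * Real.exp (-(q 1)))
      (-(A1 * Real.exp (-(q 0)))) (q 0) := by
    refine ((hasDerivAt_neg (q 0)).exp.const_mul A1).add_const _ |>.congr_deriv ?_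
    ring
  have h := ((hv.inv (Real.exp_ne_zero _)).mul_const (Jform d1 d2 p)).sub (hs.mul hv)
  rw [pderivQ]
  refine (h.congr_of_eventuallyEq (Filter.Eventually.of_forall fun t => ?_)).deriv.trans ?_
  · simp only [Ham, vol, Function.update_self, ne_eq, one_ne_zero, not_false_eq_true,
      Function.update_of_ne]
    rfl
  simp only [vol]
  have := Real.exp_ne_zero ((d1 * q 0 + d2 * q 1) / 2)
  field_simp
  ring

lemma pderivQ_Ham_one (d1 d2 : ℕ) (A1 A2 : ℝ) (q p : Fin 2 → ℝ) :
    pderivQ (Ham d1 d2 fun q => A1 * Real.exp (-(q 0)) + A2 * Real.exp (-(q 1))) 1 q p =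
      -(d2 / 2 * (vol d1 d2 q)⁻¹ * Jform d1 d2 p) -
        (d2 / 2 * (A1 * Real.exp (-(q 0)) + A2 * Real.exp (-(q 1))) -
          A2 * Real.exp (-(q 1))) * vol d1 d2 q := by
  have hv := hasDerivAt_exp_half d2 (d1 * q 0) (q 1)
  have hs : HasDerivAt (fun t => A1 * Real.exp (-(q 0)) + A2 * Real.exp (-t))
      (-(A2 * Real.exp (-(q 1)))) (q 1) := by
    refine ((hasDerivAt_neg (q 1)).exp.const_mul A2).const_add _ |>.congr_deriv ?_
    ring
  have h := ((hv.inv (Real.exp_ne_zero _)).mul_const (Jform d1 d2 p)).sub (hs.mul hv)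
  rw [pderivQ]
  refine (h.congr_of_eventuallyEq (Filter.Eventually.of_forall fun t => ?_)).deriv.trans ?_
  · simp only [Ham, vol, Function.update_self, ne_eq, zero_ne_one, not_false_eq_true,
      Function.update_of_ne]
    rw [add_comm ((d1 : ℝ) * q 0)]
    rfl
  simp only [vol]
  rw [add_comm ((d1 : ℝ) * q 0)]
  have := Real.exp_ne_zero ((d2 * q 1 + d1 * q 0) / 2)
  field_simp
  ring

lemma pderivP_Ham_zero (d1 d2 : ℕ) (S : (Fin 2 → ℝ) → ℝ) (q p : Fin 2 → ℝ) :
    pderivP (Ham d1 d2 S) 0 q p = (vol d1 d2 q)⁻¹ *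
      (2 * (1 / ((d1 : ℝ) + d2 - 1)) * (p 0 + p 1) - 2 * p 0 / d1) := by
  have hs := (((((hasDerivAt_id (p 0)).add_const (p 1)).pow 2).const_mul
    (1 / ((d1 : ℝ) + d2 - 1))).sub (((hasDerivAt_id (p 0)).pow 2).div_const (d1 : ℝ))).sub_const
    ((p 1) ^ 2 / (d2 : ℝ))
  have h := (hs.const_mul (vol d1 d2 q)⁻¹).sub_const (S q * vol d1 d2 q)
  rw [pderivP]
  refine (h.congr_of_eventuallyEq (Filter.Eventually.of_forall fun t => ?_)).deriv.trans ?_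
  · simp only [Ham, Jform, Function.update_self, ne_eq, one_ne_zero, not_false_eq_true,
      Function.update_of_ne]
    rfl
  simp only [id, Nat.cast_ofNat, Nat.reduceSub, pow_one]
  ring

lemma pderivP_Ham_one (d1 d2 : ℕ) (S : (Fin 2 → ℝ) → ℝ) (q p : Fin 2 → ℝ) :
    pderivP (Ham d1 d2 S) 1 q p = (vol d1 d2 q)⁻¹ *
      (2 * (1 / ((d1 : ℝ) + d2 - 1)) * (p 0 + p 1) - 2 * p 1 / d2) := by
  have hs := ((((hasDerivAt_id (p 1)).const_add (p 0)).pow 2).const_mul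
    (1 / ((d1 : ℝ) + d2 - 1))).sub_const ((p 0) ^ 2 / (d1 : ℝ)) |>.sub
    (((hasDerivAt_id (p 1)).pow 2).div_const (d2 : ℝ))
  have h := (hs.const_mul (vol d1 d2 q)⁻¹).sub_const (S q * vol d1 d2 q)
  rw [pderivP]
  refine (h.congr_of_eventuallyEq (Filter.Eventually.of_forall fun t => ?_)).deriv.trans ?_
  · simp only [Ham, Jform, Function.update_self, ne_eq, zero_ne_one, not_false_eq_true,
      Function.update_of_ne]
    rfl
  simp only [id, Nat.cast_ofNat, Nat.reduceSub, pow_one]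
  ring

/-- The polynomial `F₂₀p₁² + F₀₂p₂² + F₁₁p₁p₂ + F₁p₁ + F₂p₂ + F₀` in the momenta. -/
def quadraticPoly (F20 F02 F11 F1 F2 F0 : (Fin 2 → ℝ) → ℝ) (q p : Fin 2 → ℝ) : ℝ :=
  F20 q * (p 0) ^ 2 + F02 q * (p 1) ^ 2 + F11 q * (p 0) * (p 1) + F1 q * p 0 + F2 q * p 1 + F0 q

lemma pderivQ_quadraticPoly {F20 F02 F11 F1 F2 F0 : (Fin 2 → ℝ) → ℝ}
    (hF20 : ContDiff ℝ 1 F20) (hF02 : ContDiff ℝ 1 F02) (hF11 : ContDiff ℝ 1 F11)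
    (hF1 : ContDiff ℝ 1 F1) (hF2 : ContDiff ℝ 1 F2) (hF0 : ContDiff ℝ 1 F0) (i : Fin 2)
    (q p : Fin 2 → ℝ) :
    pderivQ (quadraticPoly F20 F02 F11 F1 F2 F0) i q p =
      quadraticPoly (partialDeriv F20 i) (partialDeriv F02 i) (partialDeriv F11 i)
        (partialDeriv F1 i) (partialDeriv F2 i) (partialDeriv F0 i) q p :=
  (((((((hasDerivAt_comp_update hF20 i q).mul_const _).add
    ((hasDerivAt_comp_update hF02 i q).mul_const _)).add
    (((hasDerivAt_comp_update hF11 i q).mul_const _).mul_const _)).add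
    ((hasDerivAt_comp_update hF1 i q).mul_const _)).add
    ((hasDerivAt_comp_update hF2 i q).mul_const _)).add (hasDerivAt_comp_update hF0 i q)).deriv

lemma pderivP_quadraticPoly_zero (F20 F02 F11 F1 F2 F0 : (Fin 2 → ℝ) → ℝ) (q p : Fin 2 → ℝ) :
    pderivP (quadraticPoly F20 F02 F11 F1 F2 F0) 0 q p =
      2 * F20 q * p 0 + F11 q * p 1 + F1 q := by
  have hid := hasDerivAt_id (p 0)
  have h := ((((((hid.pow 2).const_mul (F20 q)).add_const (F02 q * (p 1) ^ 2)).add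
    ((hid.const_mul (F11 q)).mul_const (p 1))).add (hid.const_mul (F1 q))).add_const
    (F2 q * p 1)).add_const (F0 q)
  rw [pderivP]
  refine (h.congr_of_eventuallyEq (Filter.Eventually.of_forall fun t => ?_)).deriv.trans ?_
  · simp only [quadraticPoly, Function.update_self, ne_eq, one_ne_zero, not_false_eq_true,
      Function.update_of_ne]
    rfl
  simp
  ring

lemma pderivP_quadraticPoly_one (F20 F02 F11 F1 F2 F0 : (Fin 2 → ℝ) → ℝ) (q p : Fin 2 → ℝ) :
    pderivP (quadraticPoly F20 F02 F11 F1 F2 F0) 1 q p =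
      2 * F02 q * p 1 + F11 q * p 0 + F2 q := by
  have hid := hasDerivAt_id (p 1)
  have h := ((((((hid.pow 2).const_mul (F02 q)).const_add (F20 q * (p 0) ^ 2)).add
    (hid.const_mul (F11 q * p 0))).add_const (F1 q * p 0)).add
    (hid.const_mul (F2 q))).add_const (F0 q)
  rw [pderivP]
  refine (h.congr_of_eventuallyEq (Filter.Eventually.of_forall fun t => ?_)).deriv.trans ?_
  · simp only [quadraticPoly, Function.update_self, ne_eq, zero_ne_one, not_false_eq_true,
      Function.update_of_ne]
    rfl
  simp
  ring

lemma vol_mul_poisson_quadraticPoly {d1 d2 : ℕ} {A1 A2 : ℝ}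
    {F20 F02 F11 F1 F2 F0 : (Fin 2 → ℝ) → ℝ}
    (hF20 : ContDiff ℝ 1 F20) (hF02 : ContDiff ℝ 1 F02) (hF11 : ContDiff ℝ 1 F11)
    (hF1 : ContDiff ℝ 1 F1) (hF2 : ContDiff ℝ 1 F2) (hF0 : ContDiff ℝ 1 F0)
    {q p : Fin 2 → ℝ} (hJ : Jform d1 d2 p =
      (A1 * Real.exp (-(q 0)) + A2 * Real.exp (-(q 1))) * vol d1 d2 q ^ 2) :
    vol d1 d2 q * poisson (quadraticPoly F20 F02 F11 F1 F2 F0)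
        (Ham d1 d2 fun q => A1 * Real.exp (-(q 0)) + A2 * Real.exp (-(q 1))) q p =
      quadraticPoly (partialDeriv F20 0) (partialDeriv F02 0) (partialDeriv F11 0)
          (partialDeriv F1 0) (partialDeriv F2 0) (partialDeriv F0 0) q p *
        (2 * (1 / ((d1 : ℝ) + d2 - 1)) * (p 0 + p 1) - 2 * p 0 / d1) +
      quadraticPoly (partialDeriv F20 1) (partialDeriv F02 1) (partialDeriv F11 1)
          (partialDeriv F1 1) (partialDeriv F2 1) (partialDeriv F0 1) q p *
        (2 * (1 / ((d1 : ℝ) + d2 - 1)) * (p 0 + p 1) - 2 * p 1 / d2) +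
      (2 * F20 q * p 0 + F11 q * p 1 + F1 q) *
        ((d1 - 1) * (A1 * (Real.exp (-(q 0)) * vol d1 d2 q ^ 2)) +
          d1 * (A2 * (Real.exp (-(q 1)) * vol d1 d2 q ^ 2))) +
      (2 * F02 q * p 1 + F11 q * p 0 + F2 q) *
        (d2 * (A1 * (Real.exp (-(q 0)) * vol d1 d2 q ^ 2)) +
          (d2 - 1) * (A2 * (Real.exp (-(q 1)) * vol d1 d2 q ^ 2))) := by
  have hv : vol d1 d2 q ≠ 0 := Real.exp_ne_zero _
  rw [poisson, Fin.sum_univ_two, pderivQ_quadraticPoly hF20 hF02 hF11 hF1 hF2 hF0,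
    pderivQ_quadraticPoly hF20 hF02 hF11 hF1 hF2 hF0, pderivP_quadraticPoly_zero,
    pderivP_quadraticPoly_one, pderivP_Ham_zero, pderivP_Ham_one, pderivQ_Ham_zero,
    pderivQ_Ham_one, hJ]
  generalize quadraticPoly _ _ _ _ _ _ q p = P
  generalize quadraticPoly _ _ _ _ _ _ q p = Q
  generalize vol d1 d2 q = v at *
  generalize 2 * (1 / ((d1 : ℝ) + d2 - 1)) * (p 0 + p 1) - 2 * p 0 / d1 = X
  generalize 2 * (1 / ((d1 : ℝ) + d2 - 1)) * (p 0 + p 1) - 2 * p 1 / d2 = Y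
  field_simp
  ring

lemma exp_neg_mul_vol_sq_zero (d1 d2 : ℕ) (ρ σ u w : ℝ) :
    Real.exp (-(u + w)) * vol d1 d2 ![u + w, -ρ * u - σ * w] ^ 2 =
      Real.exp ((d1 - 1 - ρ * d2) * u) * Real.exp ((d1 - 1 - σ * d2) * w) := by
  rw [vol, sq, ← Real.exp_add, ← Real.exp_add, ← Real.exp_add]
  congr 1
  simp only [Matrix.cons_val_zero, Matrix.cons_val_one]
  ring

lemma exp_neg_mul_vol_sq_one (d1 d2 : ℕ) (ρ σ u w : ℝ) :
    Real.exp (-(-ρ * u - σ * w)) * vol d1 d2 ![u + w, -ρ * u - σ * w] ^ 2 =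
      Real.exp ((d1 - ρ * (d2 - 1)) * u) * Real.exp ((d1 - σ * (d2 - 1)) * w) := by
  rw [vol, sq, ← Real.exp_add, ← Real.exp_add, ← Real.exp_add]
  congr 1
  simp only [Matrix.cons_val_zero, Matrix.cons_val_one]
  ring

/-- Dancer–Wang: for `S(q) = A₁e^{−q₁} + A₂e^{−q₂}` with `2 ≤ d₁ ≤ d₂` and
`4d₁ ≠ d₂(d₁−1)`, every quadratic-in-momenta first integral on `V_H` is trivial. -/
theorem quadratic_first_integral_trivial_case_i
    (d1 d2 : ℕ) (hd1pos : 0 < d1) (hd2pos : 0 < d2) (hd1 : 2 ≤ d1) (hle : d1 ≤ d2)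
    (A1 A2 : ℝ) (hA1 : 0 < A1) (hA2 : 0 < A2)
    (hne : 4 * (d1 : ℝ) ≠ (d2 : ℝ) * ((d1 : ℝ) - 1))
    (S : (Fin 2 → ℝ) → ℝ)
    (hS : S = fun q => A1 * Real.exp (-(q 0)) + A2 * Real.exp (-(q 1)))
    (F20 F02 F11 F1 F2 F0 : (Fin 2 → ℝ) → ℝ)
    (hF20 : ContDiff ℝ 1 F20) (hF02 : ContDiff ℝ 1 F02) (hF11 : ContDiff ℝ 1 F11)
    (hF1 : ContDiff ℝ 1 F1) (hF2 : ContDiff ℝ 1 F2) (hF0 : ContDiff ℝ 1 F0)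
    (F : (Fin 2 → ℝ) → (Fin 2 → ℝ) → ℝ)
    (hF : F = fun q p => F20 q * (p 0) ^ 2 + F02 q * (p 1) ^ 2 + F11 q * (p 0) * (p 1) +
      F1 q * p 0 + F2 q * p 1 + F0 q)
    (hbracket : ∀ q p : Fin 2 → ℝ, Ham d1 d2 S q p = 0 → poisson F (Ham d1 d2 S) q p = 0) :
    ∃ (φ : (Fin 2 → ℝ) → ℝ) (c : ℝ), ContDiff ℝ 1 φ ∧
      ∀ q p : Fin 2 → ℝ, F q p = φ q * Ham d1 d2 S q p + c := by
  subst hS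
  have hF' : F = quadraticPoly F20 F02 F11 F1 F2 F0 := hF
  subst hF'
  have hx : (2 : ℝ) ≤ d1 := by exact_mod_cast hd1
  have hy : (2 : ℝ) ≤ d2 := by exact_mod_cast hd1.trans hle
  obtain ⟨ρ, σ, hρσ, hsum, hprod⟩ := exists_null_directions hx hy
  have hg := nonresonantRates_of_null_directions hd1 hle hne hρσ hsum hprod
  have hn : (0 : ℝ) < (d1 : ℝ) + d2 - 1 := by linarith
  have hd20 : (d2 : ℝ) ≠ 0 := by linarith
  have hd21 : (d2 : ℝ) - 1 ≠ 0 := by linarith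
  have hd10 : (d1 : ℝ) ≠ 0 := by linarith
  obtain ⟨j, hj⟩ : ∃ j : ℝ, j = -((d2 - 1) / (d1 * ((d1 : ℝ) + d2 - 1))) := ⟨_, rfl⟩
  have hj0 : j < 0 := by
    rw [hj, neg_lt_zero]
    apply div_pos <;> nlinarith
  have hj1 : j = 1 / ((d1 : ℝ) + d2 - 1) - 1 / d1 := by
    rw [hj]; field_simp; ring
  have hjs : j * (ρ + σ) = -2 * (1 / ((d1 : ℝ) + d2 - 1)) := by
    rw [hj, hsum]; field_simp
  have hjp : j * (ρ * σ) = 1 / ((d1 : ℝ) + d2 - 1) - 1 / d2 := by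
    rw [hj, hprod]; field_simp; ring
  have hJ : ∀ p, Jform d1 d2 p = j * ((p 0 - ρ * p 1) * (p 0 - σ * p 1)) := fun p => by
    rw [Jform]
    linear_combination -(p 0) ^ 2 * hj1 + p 0 * p 1 * hjs - (p 1) ^ 2 * hjp
  obtain ⟨k, hk⟩ : ∃ k : ℝ, k * (σ - ρ) = 1 :=
    ⟨(σ - ρ)⁻¹, inv_mul_cancel₀ (sub_ne_zero.mpr hρσ.symm)⟩
  have hpart := fun {f : (Fin 2 → ℝ) → ℝ} (hf : ContDiff ℝ 1 f) =>
    hasPartials_comp_linear hf ρ σ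
  obtain ⟨c, hc⟩ := trivial_of_null_coordinates
    (W := fun u w => A1 / j * (Real.exp ((d1 - 1 - ρ * d2) * u) *
        Real.exp ((d1 - 1 - σ * d2) * w)) +
      A2 / j * (Real.exp ((d1 - ρ * (d2 - 1)) * u) * Real.exp ((d1 - σ * (d2 - 1)) * w)))
    hg (div_neg_of_pos_of_neg hA1 hj0) (div_neg_of_pos_of_neg hA2 hj0)
    (fun _ _ => rfl) (fun _ _ => rfl) (fun _ _ => rfl)
    ((((hpart hF20).const_mul (k ^ 2 * σ ^ 2)).add ((hpart hF02).const_mul (k ^ 2))).add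
      ((hpart hF11).const_mul (k ^ 2 * σ)))
    ((((hpart hF20).const_mul (k ^ 2 * ρ ^ 2)).add ((hpart hF02).const_mul (k ^ 2))).add
      ((hpart hF11).const_mul (k ^ 2 * ρ)))
    ((((hpart hF20).const_mul (-2 * k ^ 2 * σ * ρ)).add
      ((hpart hF02).const_mul (-2 * k ^ 2))).add ((hpart hF11).const_mul (-k ^ 2 * (σ + ρ))))
    (((hpart hF1).const_mul (k * σ)).add ((hpart hF2).const_mul k))
    (((hpart hF1).const_mul (-k * ρ)).add ((hpart hF2).const_mul (-k)))
    (hpart hF0) (fun u w x y hxy => by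
      have hp0 : k * (σ * x - ρ * y) - ρ * (k * (x - y)) = x := by linear_combination x * hk
      have hp1 : k * (σ * x - ρ * y) - σ * (k * (x - y)) = y := by linear_combination y * hk
      have hJW : Jform d1 d2 ![k * (σ * x - ρ * y), k * (x - y)] =
          (A1 * Real.exp (-(u + w)) + A2 * Real.exp (-(-ρ * u - σ * w))) *
            vol d1 d2 ![u + w, -ρ * u - σ * w] ^ 2 := by
        rw [hJ, add_mul, mul_assoc, exp_neg_mul_vol_sq_zero, mul_assoc, exp_neg_mul_vol_sq_one]
        simp only [Matrix.cons_val_zero, Matrix.cons_val_one]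
        rw [hp0, hp1, hxy]
        field_simp [hj0.ne]
      have hv : vol d1 d2 ![u + w, -ρ * u - σ * w] ≠ 0 := Real.exp_ne_zero _
      have hbr := hbracket ![u + w, -ρ * u - σ * w] ![k * (σ * x - ρ * y), k * (x - y)] (by
        rw [Ham, hJW]
        simp only [Matrix.cons_val_zero, Matrix.cons_val_one]
        field_simp
        ring)
      have hid := vol_mul_poisson_quadraticPoly hF20 hF02 hF11 hF1 hF2 hF0
        (q := ![u + w, -ρ * u - σ * w]) hJW
      rw [hbr, mul_zero] at hid
      have hX : 2 * (1 / ((d1 : ℝ) + d2 - 1)) * (k * (σ * x - ρ * y) + k * (x - y)) -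
          2 * (k * (σ * x - ρ * y)) / d1 = j * (x + y) := by
        linear_combination -2 * (k * (σ * x - ρ * y)) * hj1 + k * (x - y) * hjs +
          j * (x + y) * hk
      have hY : 2 * (1 / ((d1 : ℝ) + d2 - 1)) * (k * (σ * x - ρ * y) + k * (x - y)) -
          2 * (k * (x - y)) / d2 = -j * (σ * x + ρ * y) := by
        linear_combination k * (σ * x - ρ * y) * hjs - 2 * (k * (x - y)) * hjp -
          j * (σ * x + ρ * y) * hk
      simp only [Matrix.cons_val_zero, Matrix.cons_val_one, quadraticPoly,
        exp_neg_mul_vol_sq_zero, exp_neg_mul_vol_sq_one] at hid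
      have hA1j : A1 = j * (A1 / j) := (mul_div_cancel₀ A1 hj0.ne).symm
      have hA2j : A2 = j * (A2 / j) := (mul_div_cancel₀ A2 hj0.ne).symm
      generalize A1 / j = B1 at hA1j
      generalize A2 / j = B2 at hA2j
      rw [hX, hY, hA1j, hA2j] at hid
      generalize Real.exp ((d1 - 1 - ρ * d2) * u) * Real.exp ((d1 - 1 - σ * d2) * w) = E1 at hid ⊢
      generalize Real.exp ((d1 - ρ * (d2 - 1)) * u) * Real.exp ((d1 - σ * (d2 - 1)) * w) = E2
        at hid ⊢
      generalize (![u + w, -ρ * u - σ * w] : Fin 2 → ℝ) = q at hid ⊢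
      refine (mul_eq_zero.mp ?_).resolve_left hj0.ne
      linear_combination -hid +
        j * ((2 * F20 q * (k * (σ * x - ρ * y)) + F11 q * (k * (x - y)) + F1 q) *
            ((d1 - 1) * (B1 * E1) + d1 * (B2 * E2)) +
          (2 * F02 q * (k * (x - y)) + F11 q * (k * (σ * x - ρ * y)) + F2 q) *
            (d2 * (B1 * E1) + (d2 - 1) * (B2 * E2))) * hk)
  refine ⟨fun q => (-2 * k ^ 2 * σ * ρ * F20 q + -2 * k ^ 2 * F02 q +
    -k ^ 2 * (σ + ρ) * F11 q) * vol d1 d2 q / j, c, ?_, fun q p => ?_⟩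
  · unfold vol
    fun_prop
  · obtain ⟨u, hu⟩ : ∃ u, u = k * (σ * q 0 + q 1) := ⟨_, rfl⟩
    obtain ⟨w, hw⟩ : ∃ w, w = -k * (ρ * q 0 + q 1) := ⟨_, rfl⟩
    have hq0 : u + w = q 0 := by rw [hu, hw]; linear_combination q 0 * hk
    have hq1 : -ρ * u - σ * w = q 1 := by rw [hu, hw]; linear_combination q 1 * hk
    have hq : ![u + w, -ρ * u - σ * w] = q := by
      rw [hq0, hq1]
      ext i
      fin_cases i <;> rfl
    have h := hc u w (p 0 - ρ * p 1) (p 0 - σ * p 1)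
    rw [← exp_neg_mul_vol_sq_zero, ← exp_neg_mul_vol_sq_one, hq, hq0, hq1] at h
    have hv : vol d1 d2 q ≠ 0 := Real.exp_ne_zero _
    have hp0 : k * (σ * (p 0 - ρ * p 1) - ρ * (p 0 - σ * p 1)) = p 0 := by
      linear_combination p 0 * hk
    have hp1 : k * ((p 0 - ρ * p 1) - (p 0 - σ * p 1)) = p 1 := by
      linear_combination p 1 * hk
    have hH : (p 0 - ρ * p 1) * (p 0 - σ * p 1) -
        (A1 / j * (Real.exp (-(q 0)) * vol d1 d2 q ^ 2) +
          A2 / j * (Real.exp (-(q 1)) * vol d1 d2 q ^ 2)) = vol d1 d2 q / j *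
        Ham d1 d2 (fun q => A1 * Real.exp (-(q 0)) + A2 * Real.exp (-(q 1))) q p := by
      rw [Ham, hJ]
      field_simp [hj0.ne]
    rw [hH] at h
    simp only [quadraticPoly]
    linear_combination h -
      F20 q * (k * (σ * (p 0 - ρ * p 1) - ρ * (p 0 - σ * p 1)) + p 0) * hp0 -
      F02 q * (k * ((p 0 - ρ * p 1) - (p 0 - σ * p 1)) + p 1) * hp1 -
      F11 q * (k * ((p 0 - ρ * p 1) - (p 0 - σ * p 1))) * hp0 - F11 q * p 0 * hp1 -
      F1 q * hp0 - F2 q * hp1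
end

section
/- Let d_1, d_2 be positive integers, let A_1, A_2 > 0, and let S(q) = A_1 e^{−q_2} − A_2 e^{q_1 − 2q_2}, with H the associated Ricci-flat cohomogeneity one Hamiltonian on ℝ²×ℝ². Let F(q,p) = F_{20}(q)p_1² + F_{02}(q)p_2² + F_{11}(q)p_1p_2 + F_1(q)p_1 + F_2(q)p_2 + F_0(q), where all six coefficient functions are C¹ on ℝ², and suppose {F,H} = 0 at every point of V_H. If in addition d_1 ≠ 1, d_2 ≠ 2, and 9d_1 ≠ d_2(d_1 − 4), then F is a trivial first integral: there exist a C¹ function φ : ℝ² → ℝ and a constant c ∈ ℝ such that F(q,p) = φ(q)·H(q,p) + c for all (q,p) ∈ ℝ²×ℝ². -/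
open Real in
theorem eq_zero_of_exp_combination {c p q r : ℝ} (hc : c ≠ 0)
    (h : ∀ u : ℝ, p + q * exp (c * u) + r * exp (-(c * u)) = 0) : p = 0 ∧ q = 0 ∧ r = 0 := by
  have key : ∀ x : ℝ, 0 < x → p + q * x + r * x⁻¹ = 0 := by
    intro x hx
    have := h (log x / c)
    rwa [mul_div_cancel₀ _ hc, exp_neg, exp_log hx] at this
  have h1 := key 1 one_pos
  have h2 := key 2 two_pos
  have h3 := key 3 three_pos
  norm_num at h1 h2 h3
  refine ⟨?_, ?_, ?_⟩ <;> linarith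

/-- Matching of two rank-two decompositions of the same function of two variables. -/
theorem exists_coeffs_of_separated {g₁ g₂ h₁ h₂ M N K L : ℝ → ℝ}
    (hg : ∃ s t, g₁ s * g₂ t - g₁ t * g₂ s ≠ 0) (hh : ∃ s t, h₁ s * h₂ t - h₁ t * h₂ s ≠ 0)
    (h : ∀ u w, g₁ w * M u + g₂ w * N u = h₁ u * K w + h₂ u * L w) :
    ∃ x y x' y' : ℝ, (∀ u, M u = x * h₁ u + y * h₂ u) ∧ (∀ u, N u = x' * h₁ u + y' * h₂ u) ∧
      (∀ w, K w = x * g₁ w + x' * g₂ w) ∧ (∀ w, L w = y * g₁ w + y' * g₂ w) := by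
  obtain ⟨s, t, hst⟩ := hg
  obtain ⟨s', t', hst'⟩ := hh
  set d := g₁ s * g₂ t - g₁ t * g₂ s with hd
  obtain ⟨x, hx⟩ : ∃ x, x = (K s * g₂ t - K t * g₂ s) / d := ⟨_, rfl⟩
  obtain ⟨y, hy⟩ : ∃ y, y = (L s * g₂ t - L t * g₂ s) / d := ⟨_, rfl⟩
  obtain ⟨x', hx'⟩ : ∃ x', x' = (g₁ s * K t - g₁ t * K s) / d := ⟨_, rfl⟩
  obtain ⟨y', hy'⟩ : ∃ y', y' = (g₁ s * L t - g₁ t * L s) / d := ⟨_, rfl⟩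
  rw [eq_div_iff hst] at hx hy hx' hy'
  have hM : ∀ u, M u = x * h₁ u + y * h₂ u := fun u => mul_right_cancel₀ hst <| by
    linear_combination M u * hd + g₂ t * h u s - g₂ s * h u t - h₁ u * hx - h₂ u * hy
  have hN : ∀ u, N u = x' * h₁ u + y' * h₂ u := fun u => mul_right_cancel₀ hst <| by
    linear_combination N u * hd + g₁ s * h u t - g₁ t * h u s - h₁ u * hx' - h₂ u * hy'
  refine ⟨x, y, x', y', hM, hN, fun w => ?_, fun w => ?_⟩
  · have e := h s' w
    have e' := h t' w
    rw [hM, hN] at e e'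
    refine mul_right_cancel₀ hst' ?_
    linear_combination h₂ s' * e' - h₂ t' * e
  · have e := h s' w
    have e' := h t' w
    rw [hM, hN] at e e'
    refine mul_right_cancel₀ hst' ?_
    linear_combination h₁ t' * e - h₁ s' * e'

open Real in
theorem exists_exp_wronskian_ne_zero {a b : ℝ} (hab : a ≠ b) :
    ∃ s t : ℝ, exp (a * s) * exp (b * t) - exp (a * t) * exp (b * s) ≠ 0 := by
  refine ⟨0, 1, fun h => hab ?_⟩
  simp only [mul_zero, exp_zero, mul_one, one_mul] at h
  exact (exp_injective (sub_eq_zero.1 h)).symm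

open Real in
theorem exists_primitive_exp (a : ℝ) :
    ∃ I : ℝ → ℝ, I 0 = 0 ∧ ∀ w, HasDerivAt I (exp (a * w)) w := by
  refine ⟨fun w => ∫ s in (0 : ℝ)..w, exp (a * s), by simp, fun w => ?_⟩
  have hc : Continuous fun s : ℝ => exp (a * s) := by fun_prop
  exact hc.integral_hasStrictDerivAt 0 w |>.hasDerivAt

open Real in
theorem exists_primitive_wronskian_ne_zero {a b : ℝ} (hab : a ≠ b) {I I' : ℝ → ℝ}
    (hI : ∀ w, HasDerivAt I (exp (a * w)) w) (hI' : ∀ w, HasDerivAt I' (exp (b * w)) w) :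
    ∃ s t : ℝ, I s * I' t - I t * I' s ≠ 0 := by
  by_contra! h
  have h1 : ∀ t, I' t = I t := fun t => by
    have e := ((hI 0).mul_const (I' t)).sub ((hI' 0).const_mul (I t))
    have e' : HasDerivAt (fun s => I s * I' t - I t * I' s) 0 0 := by
      simp only [h]; exact hasDerivAt_const _ _
    have := e.unique e'
    simp at this
    linarith
  have h2 : exp (a * 1) = exp (b * 1) := (hI 1).unique <| by
    rw [← funext h1]; exact hI' 1
  simp at h2
  exact hab h2

open Real in
theorem hasDerivAt_of_separated_gradient {a₁ a₂ b₁ b₂ : ℝ} (h₁ : a₁ ≠ b₁) (h₂ : a₂ ≠ b₂)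
    {f : ℝ → ℝ → ℝ} {M N K L : ℝ → ℝ}
    (hw : ∀ u w, HasDerivAt (fun w => f u w) (exp (a₂ * w) * M u + exp (b₂ * w) * N u) w)
    (hu : ∀ u w, HasDerivAt (fun u => f u w) (exp (a₁ * u) * K w + exp (b₁ * u) * L w) u) :
    ∃ x y x' y' : ℝ,
      (∀ u, HasDerivAt M (x * exp (a₁ * u) + y * exp (b₁ * u)) u) ∧
      (∀ u, HasDerivAt N (x' * exp (a₁ * u) + y' * exp (b₁ * u)) u) ∧
      (∀ w, HasDerivAt K (x * exp (a₂ * w) + x' * exp (b₂ * w)) w) ∧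
      (∀ w, HasDerivAt L (y * exp (a₂ * w) + y' * exp (b₂ * w)) w) := by
  obtain ⟨I, hI0, hI⟩ := exists_primitive_exp a₂
  obtain ⟨I', hI0', hI'⟩ := exists_primitive_exp b₂
  have hdet := exists_primitive_wronskian_ne_zero h₂ hI hI'
  have hf : ∀ u w, f u w - f u 0 = I w * M u + I' w * N u := by
    intro u w
    have hd : ∀ w, HasDerivAt (fun w => f u w - (I w * M u + I' w * N u)) 0 w := fun w => by
      have := (hw u w).sub (((hI w).mul_const (M u)).add ((hI' w).mul_const (N u)))
      exact this.congr_deriv (by ring)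
    have := is_const_of_deriv_eq_zero (fun w => (hd w).differentiableAt)
      (fun w => (hd w).deriv) w 0
    simp only [hI0, hI0'] at this
    linarith
  have hfu : ∀ u w, HasDerivAt (fun u => f u w - f u 0)
      (exp (a₁ * u) * (K w - K 0) + exp (b₁ * u) * (L w - L 0)) u := fun u w =>
    ((hu u w).sub (hu u 0)).congr_deriv (by ring)
  obtain ⟨s, t, hst⟩ := id hdet
  have hM : ∀ u, DifferentiableAt ℝ M u := fun u => by
    have e : M = fun u => ((f u s - f u 0) * I' t - (f u t - f u 0) * I' s)
        / (I s * I' t - I t * I' s) := by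
      funext u; rw [hf, hf, eq_div_iff hst]; ring
    rw [e]
    exact (((hfu u s).differentiableAt.mul_const _).sub
      ((hfu u t).differentiableAt.mul_const _)).div_const _
  have hN : ∀ u, DifferentiableAt ℝ N u := fun u => by
    have e : N = fun u => ((f u t - f u 0) * I s - (f u s - f u 0) * I t)
        / (I s * I' t - I t * I' s) := by
      funext u; rw [hf, hf, eq_div_iff hst]; ring
    rw [e]
    exact (((hfu u t).differentiableAt.mul_const _).sub
      ((hfu u s).differentiableAt.mul_const _)).div_const _
  have hsep : ∀ u w, I w * deriv M u + I' w * deriv N u =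
      exp (a₁ * u) * (K w - K 0) + exp (b₁ * u) * (L w - L 0) := fun u w => by
    refine HasDerivAt.unique ?_ (hfu u w)
    simp only [hf]
    exact ((hM u).hasDerivAt.const_mul _).add ((hN u).hasDerivAt.const_mul _)
  obtain ⟨x, y, x', y', eM, eN, eK, eL⟩ := exists_coeffs_of_separated
    (h₁ := fun u => exp (a₁ * u)) (h₂ := fun u => exp (b₁ * u))
    (K := fun w => K w - K 0) (L := fun w => L w - L 0)
    hdet (exists_exp_wronskian_ne_zero h₁) hsep
  refine ⟨x, y, x', y', fun u => eM u ▸ (hM u).hasDerivAt, fun u => eN u ▸ (hN u).hasDerivAt,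
    fun w => ?_, fun w => ?_⟩
  · have e : K = fun w => K 0 + (x * I w + x' * I' w) := by
      funext w; linarith [eK w]
    rw [e]
    exact (((hI w).const_mul x).add ((hI' w).const_mul x')).const_add _
  · have e : L = fun w => L 0 + (y * I w + y' * I' w) := by
      funext w; linarith [eL w]
    rw [e]
    exact (((hI w).const_mul y).add ((hI' w).const_mul y')).const_add _

open Real in
theorem hasDerivAt_exp_mul (c u : ℝ) : HasDerivAt (fun u => exp (c * u)) (c * exp (c * u)) u := by
  simpa [mul_comm] using ((hasDerivAt_id u).const_mul c).exp

open Real in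
theorem hasDerivAt_exp_neg_mul (c u : ℝ) :
    HasDerivAt (fun u => exp (-(c * u))) (-(c * exp (-(c * u)))) u := by
  simpa using hasDerivAt_exp_mul (-c) u

open Real in
theorem hasDerivAt_exp_combination (c s₀ s₁ s₂ u : ℝ) :
    HasDerivAt (fun u => s₀ + s₁ * exp (c * u) + s₂ * exp (-(c * u)))
      (0 + (c * s₁) * exp (c * u) + (-(c * s₂)) * exp (-(c * u))) u :=
  ((((hasDerivAt_exp_mul c u).const_mul s₁).const_add s₀).add
    ((hasDerivAt_exp_neg_mul c u).const_mul s₂)).congr_deriv (by ring)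

open Real in
theorem first_order_system_solution {a b m₀ m₁ n₀ n₁ : ℝ} (hab : a ≠ b) (h1 : a ≠ 2 * b)
    (h2 : b ≠ 2 * a) {f f' : ℝ → ℝ} (hf : ∀ u, HasDerivAt f (f' u) u)
    (hP : ∀ u, f' u + a * f u = m₀ + m₁ * exp ((b - a) * u))
    (hR : ∀ u, f' u + b * f u = n₀ + n₁ * exp (-((b - a) * u))) :
    ∃ s, a * s = m₀ ∧ b * s = n₀ ∧ ∀ u, f u = s := by
  have hc : b - a ≠ 0 := sub_ne_zero.2 hab.symm
  obtain ⟨s₀, hs₀⟩ : ∃ s, s = (n₀ - m₀) / (b - a) := ⟨_, rfl⟩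
  obtain ⟨s₁, hs₁⟩ : ∃ s, s = (-m₁) / (b - a) := ⟨_, rfl⟩
  obtain ⟨s₂, hs₂⟩ : ∃ s, s = n₁ / (b - a) := ⟨_, rfl⟩
  rw [eq_div_iff hc] at hs₀ hs₁ hs₂
  have e : f = fun u => s₀ + s₁ * exp ((b - a) * u) + s₂ * exp (-((b - a) * u)) := by
    funext u
    refine mul_right_cancel₀ hc ?_
    linear_combination hR u - hP u - hs₀ - hs₁ * exp ((b - a) * u) - hs₂ * exp (-((b - a) * u))
  have hf' : ∀ u, f' u = _ := fun u =>
    (hf u).unique (e ▸ hasDerivAt_exp_combination (b - a) s₀ s₁ s₂ u)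
  obtain ⟨p0, p1, p2⟩ := eq_zero_of_exp_combination hc (p := a * s₀ - m₀)
    (q := b * s₁ - m₁) (r := (2 * a - b) * s₂) (fun u => by
      have := hP u
      rw [hf', e] at this
      linear_combination this)
  obtain ⟨r0, r1, r2⟩ := eq_zero_of_exp_combination hc (p := b * s₀ - n₀)
    (q := (2 * b - a) * s₁) (r := a * s₂ - n₁) (fun u => by
      have := hR u
      rw [hf', e] at this
      linear_combination this)
  have z1 : s₁ = 0 := (mul_eq_zero.1 r1).resolve_left fun h => h1 (by linarith)
  have z2 : s₂ = 0 := (mul_eq_zero.1 p2).resolve_left fun h => h2 (by linarith)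
  exact ⟨s₀, by linarith, by linarith, fun u => by simp [e, z1, z2]⟩

open Real in
theorem second_order_system_solution {a b m₀ m₁ n₀ n₁ : ℝ} (hab : a ≠ b) (h1 : a ≠ 2 * b)
    (h2 : b ≠ 2 * a) {f f' f'' : ℝ → ℝ} (hf : ∀ u, HasDerivAt f (f' u) u)
    (hf' : ∀ u, HasDerivAt f' (f'' u) u)
    (hP : ∀ u, f'' u + 3 * a * f' u + 2 * a ^ 2 * f u = m₀ + m₁ * exp ((b - a) * u))
    (hR : ∀ u, f'' u + 3 * b * f' u + 2 * b ^ 2 * f u = n₀ + n₁ * exp (-((b - a) * u))) :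
    ∃ s₀ s₁ s₂, 2 * a ^ 2 * s₀ = m₀ ∧ 2 * b ^ 2 * s₀ = n₀ ∧
      b * (a + b) * s₁ = m₁ ∧ (3 * b - a) * s₁ = 0 ∧
      a * (a + b) * s₂ = n₁ ∧ (3 * a - b) * s₂ = 0 ∧
      ∀ u, f u = s₀ + s₁ * exp ((b - a) * u) + s₂ * exp (-((b - a) * u)) := by
  have hc : b - a ≠ 0 := sub_ne_zero.2 hab.symm
  have h1' : a - 2 * b ≠ 0 := sub_ne_zero.2 h1
  have h2' : 2 * a - b ≠ 0 := sub_ne_zero.2 h2.symm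
  have hN : ∀ u, 3 * (b - a) * f' u + 2 * (b ^ 2 - a ^ 2) * f u =
      (n₀ - m₀) + (-m₁) * exp ((b - a) * u) + n₁ * exp (-((b - a) * u)) := fun u => by
    linear_combination hR u - hP u
  have hN' : ∀ u, 3 * (b - a) * f'' u + 2 * (b ^ 2 - a ^ 2) * f' u =
      0 + ((b - a) * (-m₁)) * exp ((b - a) * u)
        + (-((b - a) * n₁)) * exp (-((b - a) * u)) := fun u => by
    refine HasDerivAt.unique (((hf' u).const_mul _).add ((hf u).const_mul _)) ?_
    have e : ((fun u => 3 * (b - a) * f' u) + fun u => 2 * (b ^ 2 - a ^ 2) * f u) = _ := funext hN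
    rw [e]
    exact hasDerivAt_exp_combination (b - a) (n₀ - m₀) (-m₁) n₁ u
  have hD : 2 * (b - a) * (a - 2 * b) * (2 * a - b) ≠ 0 := by
    simp [hc, h1', h2']
  obtain ⟨t₀, t₁, t₂, ht⟩ : ∃ t₀ t₁ t₂ : ℝ, ∀ u,
      f u * (2 * (b - a) * (a - 2 * b) * (2 * a - b)) =
      t₀ + t₁ * exp ((b - a) * u) + t₂ * exp (-((b - a) * u)) := by
    refine ⟨9 * (b - a) * m₀ - (9 * a - 2 * (a + b)) * (n₀ - m₀),
      9 * (b - a) * m₁ + 3 * (b - a) * m₁ + (9 * a - 2 * (a + b)) * m₁,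
      3 * (b - a) * n₁ - (9 * a - 2 * (a + b)) * n₁, fun u => ?_⟩
    linear_combination 9 * (b - a) * hP u - 3 * hN' u
      - (9 * a - 2 * (a + b)) * hN u
  obtain ⟨s₀, hs₀⟩ : ∃ s, s = t₀ / (2 * (b - a) * (a - 2 * b) * (2 * a - b)) := ⟨_, rfl⟩
  obtain ⟨s₁, hs₁⟩ : ∃ s, s = t₁ / (2 * (b - a) * (a - 2 * b) * (2 * a - b)) := ⟨_, rfl⟩
  obtain ⟨s₂, hs₂⟩ : ∃ s, s = t₂ / (2 * (b - a) * (a - 2 * b) * (2 * a - b)) := ⟨_, rfl⟩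
  rw [eq_div_iff hD] at hs₀ hs₁ hs₂
  have e : f = fun u => s₀ + s₁ * exp ((b - a) * u) + s₂ * exp (-((b - a) * u)) := by
    funext u
    refine mul_right_cancel₀ hD ?_
    linear_combination ht u - hs₀ - hs₁ * exp ((b - a) * u) - hs₂ * exp (-((b - a) * u))
  have e' : f' = _ := funext fun u =>
    (hf u).unique (e ▸ hasDerivAt_exp_combination (b - a) s₀ s₁ s₂ u)
  have e'' : ∀ u, f'' u = _ := fun u =>
    (hf' u).unique (e' ▸ hasDerivAt_exp_combination (b - a) 0 _ _ u)
  obtain ⟨p0, p1, p2⟩ := eq_zero_of_exp_combination hc (p := 2 * a ^ 2 * s₀ - m₀)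
    (q := b * (a + b) * s₁ - m₁) (r := (2 * a - b) * ((3 * a - b) * s₂)) (fun u => by
      have := hP u
      rw [e'', e', e] at this
      linear_combination this)
  obtain ⟨r0, r1, r2⟩ := eq_zero_of_exp_combination hc (p := 2 * b ^ 2 * s₀ - n₀)
    (q := (a - 2 * b) * ((a - 3 * b) * s₁)) (r := a * (a + b) * s₂ - n₁) (fun u => by
      have := hR u
      rw [e'', e', e] at this
      linear_combination this)
  exact ⟨s₀, s₁, s₂, by linarith, by linarith, by linarith,
    by linarith [(mul_eq_zero.1 r1).resolve_left h1'], by linarith,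
    (mul_eq_zero.1 p2).resolve_left h2', fun u => by rw [e]⟩

theorem resonant_coeffs_eq_zero {a b a' b' s t c c' y : ℝ} (h : a ≠ b) (h' : a' ≠ b')
    (hprod : a * a' ≠ b * b') (hc : c ≠ 0) (hc' : c' ≠ 0)
    (hs : (3 * b - a) * s = 0) (ht : (3 * a' - b') * t = 0)
    (hsy : b * (a + b) * s = y / c) (hty : a' * (a' + b') * t = y / c') : s = 0 ∧ t = 0 := by
  rw [eq_div_iff hc] at hsy
  rw [eq_div_iff hc'] at hty
  by_cases hs0 : s = 0
  · refine ⟨hs0, by_contra fun ht0 => h' ?_⟩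
    have e : b' = 3 * a' := by linarith [(mul_eq_zero.1 ht).resolve_right ht0]
    have : a' * a' * 4 * (t * c') = 0 := by
      subst e; rw [hs0] at hsy; linear_combination hty - hsy
    have : a' = 0 := by simpa [ht0, hc'] using this
    simp [e, this]
  · have e : a = 3 * b := by linarith [(mul_eq_zero.1 hs).resolve_right hs0]
    by_cases ht0 : t = 0
    · refine absurd ?_ h
      have : b * b * 4 * (s * c) = 0 := by
        subst e; rw [ht0] at hty; linear_combination hsy - hty
      have : b = 0 := by simpa [hs0, hc] using this
      simp [e, this]
    · have e' : b' = 3 * a' := by linarith [(mul_eq_zero.1 ht).resolve_right ht0]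
      exact absurd (by rw [e, e']; ring) hprod

open Real in
theorem hasDerivAt_of_exp_weight {a b c x y : ℝ} (hc : c ≠ 0) {f f' : ℝ → ℝ}
    (hf : ∀ u, HasDerivAt f (f' u) u)
    (h : ∀ u, HasDerivAt (fun u => c * exp (a * u) * (f' u + 2 * a * f u))
      (x * exp (a * u) + y * exp (b * u)) u) (u : ℝ) :
    HasDerivAt f' (x / c + y / c * exp ((b - a) * u) - 3 * a * f' u - 2 * a ^ 2 * f u) u := by
  have e : f' = fun u => exp (-(a * u)) / c * (c * exp (a * u) * (f' u + 2 * a * f u))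
      - 2 * a * f u := by
    funext u
    rw [exp_neg]
    field_simp
    ring
  have key := (((hasDerivAt_exp_neg_mul a u).div_const c).mul (h u)).sub
    ((hf u).const_mul (2 * a))
  rw [e]
  refine key.congr_deriv ?_
  rw [← e, sub_mul, exp_sub, exp_neg]
  field_simp
  ring

open Real in
theorem leading_coeffs_eq_zero {a₁ a₂ b₁ b₂ A₁ A₂ : ℝ} (hA₁ : A₁ ≠ 0) (hA₂ : A₂ ≠ 0)
    (h₁ : a₁ ≠ b₁) (h₂ : a₂ ≠ b₂) (h₁' : a₁ ≠ 2 * b₁) (h₂' : a₂ ≠ 2 * b₂)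
    (h₁'' : b₁ ≠ 2 * a₁) (h₂'' : b₂ ≠ 2 * a₂) (hdet : a₁ * b₂ - a₂ * b₁ ≠ 0)
    (hperm : a₁ * b₂ + a₂ * b₁ ≠ 0) (hprod : a₁ * a₂ ≠ b₁ * b₂)
    {f : ℝ → ℝ → ℝ} {α α' γ γ' : ℝ → ℝ}
    (hα : ∀ u, HasDerivAt α (α' u) u) (hγ : ∀ w, HasDerivAt γ (γ' w) w)
    (hw : ∀ u w, HasDerivAt (fun w => f u w)
      (-(α' u * (A₁ * exp (a₁ * u + a₂ * w) - A₂ * exp (b₁ * u + b₂ * w)) +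
        2 * α u * (A₁ * a₁ * exp (a₁ * u + a₂ * w) - A₂ * b₁ * exp (b₁ * u + b₂ * w)))) w)
    (hu : ∀ u w, HasDerivAt (fun u => f u w)
      (-(γ' w * (A₁ * exp (a₁ * u + a₂ * w) - A₂ * exp (b₁ * u + b₂ * w)) +
        2 * γ w * (A₁ * a₂ * exp (a₁ * u + a₂ * w) - A₂ * b₂ * exp (b₁ * u + b₂ * w)))) u) :
    (∀ u, α u = 0) ∧ (∀ w, γ w = 0) := by
  obtain ⟨x, y, x', y', hM, hN, hK, hL⟩ := hasDerivAt_of_separated_gradient h₁ h₂ (f := f)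
    (M := fun u => -A₁ * exp (a₁ * u) * (α' u + 2 * a₁ * α u))
    (N := fun u => A₂ * exp (b₁ * u) * (α' u + 2 * b₁ * α u))
    (K := fun w => -A₁ * exp (a₂ * w) * (γ' w + 2 * a₂ * γ w))
    (L := fun w => A₂ * exp (b₂ * w) * (γ' w + 2 * b₂ * γ w))
    (fun u w => (hw u w).congr_deriv (by rw [exp_add, exp_add]; ring))
    (fun u w => (hu u w).congr_deriv (by rw [exp_add, exp_add]; ring))
  have nA₁ := neg_ne_zero.2 hA₁
  have dM := hasDerivAt_of_exp_weight nA₁ hα hM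
  have dN := hasDerivAt_of_exp_weight hA₂ hα fun u => (hN u).congr_deriv (add_comm _ _)
  have dK := hasDerivAt_of_exp_weight nA₁ hγ hK
  have dL := hasDerivAt_of_exp_weight hA₂ hγ fun u => (hL u).congr_deriv (add_comm _ _)
  obtain ⟨s₀, s₁, s₂, p0, q0, p1, r1, p2, r2, eα⟩ :=
    second_order_system_solution h₁ h₁' h₁'' hα dM
      (m₀ := x / -A₁) (m₁ := y / -A₁) (n₀ := y' / A₂) (n₁ := x' / A₂)
      (fun u => by ring)
      (fun u => by
        rw [(dM u).unique (dN u), show (a₁ - b₁) * u = -((b₁ - a₁) * u) by ring]; ring)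
  obtain ⟨t₀, t₁, t₂, p0', q0', p1', r1', p2', r2', eγ⟩ :=
    second_order_system_solution h₂ h₂' h₂'' hγ dK
      (m₀ := x / -A₁) (m₁ := x' / -A₁) (n₀ := y' / A₂) (n₁ := y / A₂)
      (fun u => by ring)
      (fun u => by
        rw [(dK u).unique (dL u), show (a₂ - b₂) * u = -((b₂ - a₂) * u) by ring]; ring)
  obtain ⟨z1, z2'⟩ := resonant_coeffs_eq_zero h₁ h₂ hprod nA₁ hA₂ r1 r2' p1 p2'
  obtain ⟨z1', z2⟩ := resonant_coeffs_eq_zero h₂ h₁ (fun e => hprod (by linarith)) nA₁ hA₂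
    r1' r2 p1' p2
  have hne := mul_ne_zero hdet hperm
  have z0 : s₀ = 0 := by
    refine mul_left_cancel₀ hne ?_
    linear_combination (b₂ ^ 2 * (p0 - p0') - a₂ ^ 2 * (q0 - q0')) / 2
  have z0' : t₀ = 0 := by
    refine mul_left_cancel₀ hne ?_
    linear_combination (b₁ ^ 2 * (p0 - p0') - a₁ ^ 2 * (q0 - q0')) / 2
  exact ⟨fun u => by simp [eα, z0, z1, z2], fun w => by simp [eγ, z0', z1', z2']⟩

open Real in
theorem linear_coeffs_eq_zero {a₁ a₂ b₁ b₂ A₁ A₂ : ℝ} (hA₁ : A₁ ≠ 0) (hA₂ : A₂ ≠ 0)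
    (h₁ : a₁ ≠ b₁) (h₂ : a₂ ≠ b₂) (h₁' : a₁ ≠ 2 * b₁) (h₂' : a₂ ≠ 2 * b₂)
    (h₁'' : b₁ ≠ 2 * a₁) (h₂'' : b₂ ≠ 2 * a₂) (hdet : a₁ * b₂ - a₂ * b₁ ≠ 0)
    {α α' γ γ' : ℝ → ℝ}
    (hα : ∀ u, HasDerivAt α (α' u) u) (hγ : ∀ w, HasDerivAt γ (γ' w) w)
    (h : ∀ u w, (α' u + γ' w) * (A₁ * exp (a₁ * u + a₂ * w) - A₂ * exp (b₁ * u + b₂ * w)) +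
      α u * (A₁ * a₁ * exp (a₁ * u + a₂ * w) - A₂ * b₁ * exp (b₁ * u + b₂ * w)) +
      γ w * (A₁ * a₂ * exp (a₁ * u + a₂ * w) - A₂ * b₂ * exp (b₁ * u + b₂ * w)) = 0) :
    (∀ u, α u = 0) ∧ (∀ w, γ w = 0) := by
  obtain ⟨x, y, x', y', hM, hN, hK, hL⟩ := exists_coeffs_of_separated
    (exists_exp_wronskian_ne_zero h₂) (exists_exp_wronskian_ne_zero h₁)
    (M := fun u => A₁ * exp (a₁ * u) * (α' u + a₁ * α u))
    (N := fun u => -A₂ * exp (b₁ * u) * (α' u + b₁ * α u))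
    (K := fun w => -A₁ * exp (a₂ * w) * (γ' w + a₂ * γ w))
    (L := fun w => A₂ * exp (b₂ * w) * (γ' w + b₂ * γ w))
    (fun u w => by
      have := h u w
      rw [exp_add, exp_add] at this
      linear_combination this)
  have solve : ∀ {a b c x y u F : ℝ}, c ≠ 0 →
      c * exp (a * u) * F = x * exp (a * u) + y * exp (b * u)
      → F = x / c + y / c * exp ((b - a) * u) := by
    intro a b c x y u F hc e
    have hX : exp ((b - a) * u) * exp (a * u) = exp (b * u) := by rw [← exp_add]; ring_nf
    refine mul_right_cancel₀ (mul_ne_zero hc (exp_pos (a * u)).ne') ?_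
    linear_combination e - exp (a * u) * div_mul_cancel₀ x hc - y * hX
      - exp ((b - a) * u) * exp (a * u) * div_mul_cancel₀ y hc
  obtain ⟨s, p, q, eα⟩ := first_order_system_solution h₁ h₁' h₁'' hα
    (fun u => solve hA₁ (hM u)) (n₀ := y' / -A₂) (n₁ := x' / -A₂)
    (fun u => by
      rw [show -((b₁ - a₁) * u) = (a₁ - b₁) * u by ring]
      exact solve (neg_ne_zero.2 hA₂) ((hN u).trans (add_comm _ _)))
  obtain ⟨t, p', q', eγ⟩ := first_order_system_solution h₂ h₂' h₂'' hγ
    (fun u => solve (neg_ne_zero.2 hA₁) (hK u)) (n₀ := y' / A₂) (n₁ := y / A₂)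
    (fun u => by
      rw [show -((b₂ - a₂) * u) = (a₂ - b₂) * u by ring]
      exact solve hA₂ ((hL u).trans (add_comm _ _)))
  rw [div_neg] at q p'
  have z : s = 0 := by
    refine mul_left_cancel₀ hdet ?_
    linear_combination b₂ * (p + p') - a₂ * (q + q')
  have z' : t = 0 := by
    refine mul_left_cancel₀ hdet ?_
    linear_combination a₁ * (q + q') - b₁ * (p + p')
  exact ⟨fun u => by rw [eα, z], fun w => by rw [eγ, z']⟩

theorem eq_of_hasDerivAt_zero {f : ℝ → ℝ} (h : ∀ x, HasDerivAt f 0 x) (x y : ℝ) : f x = f y :=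
  is_const_of_deriv_eq_zero (fun x => (h x).differentiableAt) (fun x => (h x).deriv) x y

theorem laurent_coeffs_eq_zero {c₃ c₂ c₁ c₀ d₁ d₂ d₃ : ℝ}
    (h : ∀ t : ℝ, t ≠ 0 → c₃ * t ^ 3 + c₂ * t ^ 2 + c₁ * t + c₀ + d₁ * t⁻¹ + d₂ * t⁻¹ ^ 2
      + d₃ * t⁻¹ ^ 3 = 0) :
    c₃ = 0 ∧ c₂ = 0 ∧ c₁ = 0 ∧ c₀ = 0 := by
  have h1 := h 1 (by norm_num)
  have h2 := h (-1) (by norm_num)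
  have h3 := h 2 (by norm_num)
  have h4 := h (-2) (by norm_num)
  have h5 := h 3 (by norm_num)
  have h6 := h (-3) (by norm_num)
  have h7 := h 4 (by norm_num)
  have h8 := h (-4) (by norm_num)
  norm_num at h1 h2 h3 h4 h5 h6 h7 h8
  refine ⟨?_, ?_, ?_, ?_⟩ <;> linarith

/-- In null coordinates, with the potential a difference of two exponentials, the bracket of a
function quadratic in the momenta (without mixed term) with `ξ η - W` vanishes on
`{ξ η = W}` only for constants. -/
theorem trivial_of_bracket_null_coordinates {a₁ a₂ b₁ b₂ A₁ A₂ : ℝ} (hA₁ : A₁ ≠ 0) (hA₂ : A₂ ≠ 0)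
    (h₁ : a₁ ≠ b₁) (h₂ : a₂ ≠ b₂) (h₁' : a₁ ≠ 2 * b₁) (h₂' : a₂ ≠ 2 * b₂)
    (h₁'' : b₁ ≠ 2 * a₁) (h₂'' : b₂ ≠ 2 * a₂) (hdet : a₁ * b₂ - a₂ * b₁ ≠ 0)
    (hperm : a₁ * b₂ + a₂ * b₁ ≠ 0) (hprod : a₁ * a₂ ≠ b₁ * b₂)
    {W Wu Ww : ℝ → ℝ → ℝ}
    (hW : ∀ u w, W u w =
      A₁ * Real.exp (a₁ * u + a₂ * w) - A₂ * Real.exp (b₁ * u + b₂ * w))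
    (hWu : ∀ u w, Wu u w =
      A₁ * a₁ * Real.exp (a₁ * u + a₂ * w) - A₂ * b₁ * Real.exp (b₁ * u + b₂ * w))
    (hWw : ∀ u w, Ww u w =
      A₁ * a₂ * Real.exp (a₁ * u + a₂ * w) - A₂ * b₂ * Real.exp (b₁ * u + b₂ * w))
    {α αu αw γ γu γw f fu fw g gu gw k ku kw : ℝ → ℝ → ℝ}
    (hαu : ∀ u w, HasDerivAt (fun u => α u w) (αu u w) u)
    (hαw : ∀ u w, HasDerivAt (fun w => α u w) (αw u w) w)
    (hγu : ∀ u w, HasDerivAt (fun u => γ u w) (γu u w) u)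
    (hγw : ∀ u w, HasDerivAt (fun w => γ u w) (γw u w) w)
    (hfu : ∀ u w, HasDerivAt (fun u => f u w) (fu u w) u)
    (hfw : ∀ u w, HasDerivAt (fun w => f u w) (fw u w) w)
    (hgu : ∀ u w, HasDerivAt (fun u => g u w) (gu u w) u)
    (hgw : ∀ u w, HasDerivAt (fun w => g u w) (gw u w) w)
    (hku : ∀ u w, HasDerivAt (fun u => k u w) (ku u w) u)
    (hkw : ∀ u w, HasDerivAt (fun w => k u w) (kw u w) w)
    (h : ∀ u w ξ η, ξ * η = W u w →
      (αu u w * ξ ^ 2 + γu u w * η ^ 2 + fu u w * ξ + gu u w * η + ku u w) * η +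
      (αw u w * ξ ^ 2 + γw u w * η ^ 2 + fw u w * ξ + gw u w * η + kw u w) * ξ +
      (2 * α u w * ξ + f u w) * Wu u w + (2 * γ u w * η + g u w) * Ww u w = 0) (u w : ℝ) :
    α u w = 0 ∧ γ u w = 0 ∧ f u w = 0 ∧ g u w = 0 ∧ k u w = k 0 0 := by
  have hξ : ∀ u w, αw u w = 0 ∧ fw u w = 0 ∧
      αu u w * W u w + 2 * α u w * Wu u w + kw u w = 0 ∧
      (fu u w + gw u w) * W u w + f u w * Wu u w + g u w * Ww u w = 0 := fun u w => by
    refine laurent_coeffs_eq_zero (d₁ := γw u w * W u w ^ 2 + 2 * γ u w * Ww u w * W u w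
      + ku u w * W u w) (d₂ := gu u w * W u w ^ 2) (d₃ := γu u w * W u w ^ 3) fun t ht => ?_
    have e : t * t⁻¹ = 1 := mul_inv_cancel₀ ht
    have := h u w t (W u w * t⁻¹) (by linear_combination W u w * e)
    field_simp at this ⊢
    linear_combination this
  have hη : ∀ u w, γu u w = 0 ∧ gu u w = 0 ∧
      γw u w * W u w + 2 * γ u w * Ww u w + ku u w = 0 ∧
      (fu u w + gw u w) * W u w + f u w * Wu u w + g u w * Ww u w = 0 := fun u w => by
    refine laurent_coeffs_eq_zero (d₁ := αu u w * W u w ^ 2 + 2 * α u w * Wu u w * W u w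
      + kw u w * W u w) (d₂ := fw u w * W u w ^ 2) (d₃ := αw u w * W u w ^ 3) fun t ht => ?_
    have e : t * t⁻¹ = 1 := mul_inv_cancel₀ ht
    have := h u w (W u w * t⁻¹) t (by linear_combination W u w * e)
    field_simp at this ⊢
    linear_combination this
  have eα : ∀ u w, α u w = α u 0 := fun u w =>
    eq_of_hasDerivAt_zero (fun w => (hξ u w).1 ▸ hαw u w) w 0
  have ef : ∀ u w, f u w = f u 0 := fun u w =>
    eq_of_hasDerivAt_zero (fun w => (hξ u w).2.1 ▸ hfw u w) w 0
  have eγ : ∀ u w, γ u w = γ 0 w := fun u w =>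
    eq_of_hasDerivAt_zero (fun u => (hη u w).1 ▸ hγu u w) u 0
  have eg : ∀ u w, g u w = g 0 w := fun u w =>
    eq_of_hasDerivAt_zero (fun u => (hη u w).2.1 ▸ hgu u w) u 0
  have eαu : ∀ u w, αu u w = αu u 0 := fun u w =>
    (hαu u w).unique (by simpa only [eα _ w] using hαu u 0)
  have efu : ∀ u w, fu u w = fu u 0 := fun u w =>
    (hfu u w).unique (by simpa only [ef _ w] using hfu u 0)
  have eγw : ∀ u w, γw u w = γw 0 w := fun u w =>
    (hγw u w).unique (by simpa only [eγ u] using hγw 0 w)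
  have egw : ∀ u w, gw u w = gw 0 w := fun u w =>
    (hgw u w).unique (by simpa only [eg u] using hgw 0 w)
  obtain ⟨zα, zγ⟩ := leading_coeffs_eq_zero hA₁ hA₂ h₁ h₂ h₁' h₂' h₁'' h₂'' hdet hperm hprod
    (f := k) (fun u => hαu u 0) (fun w => hγw 0 w)
    (fun u w => (hkw u w).congr_deriv (by
      rw [← hW, ← hWu, ← eα u w, ← eαu u w]; linarith [(hξ u w).2.2.1]))
    (fun u w => (hku u w).congr_deriv (by
      rw [← hW, ← hWw, ← eγ u w, ← eγw u w]; linarith [(hη u w).2.2.1]))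
  obtain ⟨zf, zg⟩ := linear_coeffs_eq_zero hA₁ hA₂ h₁ h₂ h₁' h₂' h₁'' h₂'' hdet
    (fun u => hfu u 0) (fun w => hgw 0 w) (fun u w => by
      rw [← hW, ← hWu, ← hWw, ← ef u w, ← eg u w, ← efu u w, ← egw u w]; exact (hξ u w).2.2.2)
  have zα' : ∀ u w, α u w = 0 := fun u w => (eα u w).trans (zα u)
  have zγ' : ∀ u w, γ u w = 0 := fun u w => (eγ u w).trans (zγ w)
  have zαu : ∀ u w, αu u w = 0 := fun u w =>
    (hαu u w).unique (by simpa only [zα'] using hasDerivAt_const u (0 : ℝ))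
  have zγw : ∀ u w, γw u w = 0 := fun u w =>
    (hγw u w).unique (by simpa only [zγ'] using hasDerivAt_const w (0 : ℝ))
  have zku : ∀ u w, ku u w = 0 := fun u w => by simpa [zγw, zγ'] using (hη u w).2.2.1
  have zkw : ∀ u w, kw u w = 0 := fun u w => by simpa [zαu, zα'] using (hξ u w).2.2.1
  exact ⟨zα' u w, zγ' u w, (ef u w).trans (zf u), (eg u w).trans (zg w),
    (eq_of_hasDerivAt_zero (fun u => zku u w ▸ hku u w) u 0).trans
      (eq_of_hasDerivAt_zero (fun w => zkw 0 w ▸ hkw 0 w) w 0)⟩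

theorem hasDerivAt_comp_update_s3 {G : (Fin 2 → ℝ) → ℝ} (hG : Differentiable ℝ G) (q : Fin 2 → ℝ)
    (i : Fin 2) :
    HasDerivAt (fun t => G (Function.update q i t)) (fderiv ℝ G q (Pi.single i 1)) (q i) := by
  have h : HasFDerivAt G (fderiv ℝ G q) (Function.update q i (q i)) := by
    rw [Function.update_eq_self]; exact (hG q).hasFDerivAt
  exact h.comp_hasDerivAt (q i) (hasDerivAt_update q i (q i))

theorem fderiv_vec_apply (G : (Fin 2 → ℝ) → ℝ) (q : Fin 2 → ℝ) (x y : ℝ) :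
    fderiv ℝ G q ![x, y] =
      x * fderiv ℝ G q (Pi.single 0 1) + y * fderiv ℝ G q (Pi.single 1 1) := by
  have e : ![x, y] = x • (Pi.single 0 1 : Fin 2 → ℝ) + y • (Pi.single 1 1 : Fin 2 → ℝ) := by
    ext i; fin_cases i <;> simp
  rw [e, map_add, map_smul, map_smul, smul_eq_mul, smul_eq_mul]

theorem hasDerivAt_comp_line_left {G : (Fin 2 → ℝ) → ℝ} (hG : Differentiable ℝ G)
    (e₀ e₁ x y u : ℝ) :
    HasDerivAt (fun u => G ![u * e₀ + x, u * e₁ + y])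
      (e₀ * fderiv ℝ G ![u * e₀ + x, u * e₁ + y] (Pi.single 0 1) +
        e₁ * fderiv ℝ G ![u * e₀ + x, u * e₁ + y] (Pi.single 1 1)) u := by
  rw [← fderiv_vec_apply]
  refine (hG _).hasFDerivAt.comp_hasDerivAt u (f := fun u => ![u * e₀ + x, u * e₁ + y]) ?_
  rw [hasDerivAt_pi]
  intro i
  fin_cases i
  · simpa using ((hasDerivAt_id u).mul_const e₀).add_const x
  · simpa using ((hasDerivAt_id u).mul_const e₁).add_const y

theorem hasDerivAt_comp_line_right {G : (Fin 2 → ℝ) → ℝ} (hG : Differentiable ℝ G)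
    (f₀ f₁ x y w : ℝ) :
    HasDerivAt (fun w => G ![x + w * f₀, y + w * f₁])
      (f₀ * fderiv ℝ G ![x + w * f₀, y + w * f₁] (Pi.single 0 1) +
        f₁ * fderiv ℝ G ![x + w * f₀, y + w * f₁] (Pi.single 1 1)) w := by
  have := hasDerivAt_comp_line_left hG f₀ f₁ x y w
  simpa only [add_comm x, add_comm y] using this

/-- The rescaled potential `S v²`. -/
noncomputable def potential (d1 d2 : ℕ) (A1 A2 : ℝ) (q : Fin 2 → ℝ) : ℝ :=
  A1 * Real.exp (d1 * q 0 + (d2 - 1) * q 1) - A2 * Real.exp ((d1 + 1) * q 0 + (d2 - 2) * q 1)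

theorem vol_pos (d1 d2 : ℕ) (q : Fin 2 → ℝ) : 0 < vol d1 d2 q := Real.exp_pos _

theorem contDiff_vol (d1 d2 : ℕ) : ContDiff ℝ 1 (vol d1 d2) := by
  unfold vol; fun_prop

theorem Ham_eq (d1 d2 : ℕ) (A1 A2 : ℝ) (q p : Fin 2 → ℝ) :
    Ham d1 d2 (fun q => A1 * Real.exp (-(q 1)) - A2 * Real.exp (q 0 - 2 * q 1)) q p =
      (vol d1 d2 q)⁻¹ * (Jform d1 d2 p - potential d1 d2 A1 A2 q) := by
  have hv := (vol_pos d1 d2 q).ne'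
  have e : potential d1 d2 A1 A2 q =
      (A1 * Real.exp (-(q 1)) - A2 * Real.exp (q 0 - 2 * q 1)) * vol d1 d2 q * vol d1 d2 q := by
    have e1 : Real.exp (d1 * q 0 + (d2 - 1) * q 1) =
        Real.exp (-(q 1)) * vol d1 d2 q * vol d1 d2 q := by
      rw [vol, ← Real.exp_add, ← Real.exp_add]; ring_nf
    have e2 : Real.exp ((d1 + 1) * q 0 + (d2 - 2) * q 1) =
        Real.exp (q 0 - 2 * q 1) * vol d1 d2 q * vol d1 d2 q := by
      rw [vol, ← Real.exp_add, ← Real.exp_add]; ring_nf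
    rw [potential, e1, e2]; ring
  rw [Ham, e]
  field_simp

theorem hasDerivAt_potential_update_zero (d1 d2 : ℕ) (A1 A2 : ℝ) (q : Fin 2 → ℝ) :
    HasDerivAt (fun t => potential d1 d2 A1 A2 (Function.update q 0 t))
      (A1 * d1 * Real.exp (d1 * q 0 + (d2 - 1) * q 1) -
        A2 * (d1 + 1) * Real.exp ((d1 + 1) * q 0 + (d2 - 2) * q 1)) (q 0) := by
  simp only [potential, Function.update_self,
    Function.update_of_ne (show (1 : Fin 2) ≠ 0 by decide)]
  have h1 := ((((hasDerivAt_id (q 0)).const_mul (d1 : ℝ)).add_const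
    (((d2 : ℝ) - 1) * q 1)).exp).const_mul A1
  have h2 := ((((hasDerivAt_id (q 0)).const_mul ((d1 : ℝ) + 1)).add_const
    (((d2 : ℝ) - 2) * q 1)).exp).const_mul A2
  exact (h1.sub h2).congr_deriv (by simp only [id]; ring)

theorem hasDerivAt_potential_update_one (d1 d2 : ℕ) (A1 A2 : ℝ) (q : Fin 2 → ℝ) :
    HasDerivAt (fun t => potential d1 d2 A1 A2 (Function.update q 1 t))
      (A1 * (d2 - 1) * Real.exp (d1 * q 0 + (d2 - 1) * q 1) -
        A2 * (d2 - 2) * Real.exp ((d1 + 1) * q 0 + (d2 - 2) * q 1)) (q 1) := by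
  simp only [potential, Function.update_self,
    Function.update_of_ne (show (0 : Fin 2) ≠ 1 by decide)]
  have h1 := ((((hasDerivAt_id (q 1)).const_mul ((d2 : ℝ) - 1)).const_add
    ((d1 : ℝ) * q 0)).exp).const_mul A1
  have h2 := ((((hasDerivAt_id (q 1)).const_mul ((d2 : ℝ) - 2)).const_add
    (((d1 : ℝ) + 1) * q 0)).exp).const_mul A2
  exact (h1.sub h2).congr_deriv (by simp only [id]; ring)

/-- On the zero level the bracket is, up to the factor `v⁻¹`, the bracket with `J - S v²`. -/
theorem bracket_polynomial_eq_zero (d1 d2 : ℕ) (A1 A2 : ℝ)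
    {F20 F02 F11 F1 F2 F0 : (Fin 2 → ℝ) → ℝ}
    (hF20 : Differentiable ℝ F20) (hF02 : Differentiable ℝ F02) (hF11 : Differentiable ℝ F11)
    (hF1 : Differentiable ℝ F1) (hF2 : Differentiable ℝ F2) (hF0 : Differentiable ℝ F0)
    (q p : Fin 2 → ℝ) (hJ : Jform d1 d2 p = potential d1 d2 A1 A2 q)
    (h : poisson (fun q p => F20 q * (p 0) ^ 2 + F02 q * (p 1) ^ 2 + F11 q * (p 0) * (p 1) +
      F1 q * p 0 + F2 q * p 1 + F0 q)
      (Ham d1 d2 fun q => A1 * Real.exp (-(q 1)) - A2 * Real.exp (q 0 - 2 * q 1)) q p = 0)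
    (D : ((Fin 2 → ℝ) → ℝ) → Fin 2 → ℝ) (hD : ∀ G i, D G i = fderiv ℝ G q (Pi.single i 1)) :
    (D F20 0 * p 0 ^ 2 + D F02 0 * p 1 ^ 2 + D F11 0 * p 0 * p 1 + D F1 0 * p 0 + D F2 0 * p 1 +
      D F0 0) * (2 * (1 / ((d1 : ℝ) + d2 - 1) * (p 0 + p 1) - p 0 / d1)) +
    (D F20 1 * p 0 ^ 2 + D F02 1 * p 1 ^ 2 + D F11 1 * p 0 * p 1 + D F1 1 * p 0 + D F2 1 * p 1 +
      D F0 1) * (2 * (1 / ((d1 : ℝ) + d2 - 1) * (p 0 + p 1) - p 1 / d2)) +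
    (2 * F20 q * p 0 + F11 q * p 1 + F1 q) *
      (A1 * d1 * Real.exp (d1 * q 0 + (d2 - 1) * q 1) -
        A2 * (d1 + 1) * Real.exp ((d1 + 1) * q 0 + (d2 - 2) * q 1)) +
    (2 * F02 q * p 1 + F11 q * p 0 + F2 q) *
      (A1 * (d2 - 1) * Real.exp (d1 * q 0 + (d2 - 1) * q 1) -
        A2 * (d2 - 2) * Real.exp ((d1 + 1) * q 0 + (d2 - 2) * q 1)) = 0 := by
  have hv := inv_ne_zero (vol_pos d1 d2 q).ne'
  have hvd : Differentiable ℝ fun q => (vol d1 d2 q)⁻¹ := fun q =>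
    ((contDiff_vol d1 d2).differentiable one_ne_zero q).inv (vol_pos d1 d2 q).ne'
  have hFq : ∀ i, pderivQ (fun q p => F20 q * (p 0) ^ 2 + F02 q * (p 1) ^ 2 +
      F11 q * (p 0) * (p 1) + F1 q * p 0 + F2 q * p 1 + F0 q) i q p =
      D F20 i * p 0 ^ 2 + D F02 i * p 1 ^ 2 + D F11 i * p 0 * p 1 + D F1 i * p 0 + D F2 i * p 1 +
      D F0 i := fun i => by
    simp only [hD]
    exact ((((((hasDerivAt_comp_update_s3 hF20 q i).mul_const _).add
      ((hasDerivAt_comp_update_s3 hF02 q i).mul_const _)).add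
      (((hasDerivAt_comp_update_s3 hF11 q i).mul_const _).mul_const _)).add
      ((hasDerivAt_comp_update_s3 hF1 q i).mul_const _)).add
      ((hasDerivAt_comp_update_s3 hF2 q i).mul_const _)).add
      (hasDerivAt_comp_update_s3 hF0 q i) |>.deriv
  have hHq : ∀ i W', HasDerivAt (fun t => potential d1 d2 A1 A2 (Function.update q i t)) W' (q i) →
      pderivQ (Ham d1 d2 fun q => A1 * Real.exp (-(q 1)) - A2 * Real.exp (q 0 - 2 * q 1)) i q p =
      -((vol d1 d2 q)⁻¹ * W') := fun i W' hW' => by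
    simp only [pderivQ, Ham_eq]
    have := ((hasDerivAt_comp_update_s3 hvd q i).mul (hW'.const_sub (Jform d1 d2 p))).deriv
    refine this.trans ?_
    simp only [Function.update_eq_self, hJ]
    ring
  have hFp0 : pderivP (fun q p => F20 q * (p 0) ^ 2 + F02 q * (p 1) ^ 2 +
      F11 q * (p 0) * (p 1) + F1 q * p 0 + F2 q * p 1 + F0 q) 0 q p =
      2 * F20 q * p 0 + F11 q * p 1 + F1 q := by
    simp only [pderivP, Function.update_self,
      Function.update_of_ne (show (1 : Fin 2) ≠ 0 by decide)]
    have i := hasDerivAt_id (p 0)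
    refine HasDerivAt.deriv (((((((i.pow 2).const_mul (F20 q)).add_const (F02 q * p 1 ^ 2)).add
      ((i.const_mul (F11 q)).mul_const (p 1))).add (i.const_mul (F1 q))).add_const
      (F2 q * p 1)).add_const (F0 q) |>.congr_deriv ?_)
    simp; ring
  have hFp1 : pderivP (fun q p => F20 q * (p 0) ^ 2 + F02 q * (p 1) ^ 2 +
      F11 q * (p 0) * (p 1) + F1 q * p 0 + F2 q * p 1 + F0 q) 1 q p =
      2 * F02 q * p 1 + F11 q * p 0 + F2 q := by
    simp only [pderivP, Function.update_self,
      Function.update_of_ne (show (0 : Fin 2) ≠ 1 by decide)]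
    have i := hasDerivAt_id (p 1)
    refine HasDerivAt.deriv ((((((i.pow 2).const_mul (F02 q)).const_add (F20 q * p 0 ^ 2)).add
      (i.const_mul (F11 q * p 0))).add_const (F1 q * p 0)).add
      (i.const_mul (F2 q)) |>.add_const (F0 q) |>.congr_deriv ?_)
    simp; ring
  have hHp0 : pderivP (Ham d1 d2 fun q => A1 * Real.exp (-(q 1)) - A2 * Real.exp (q 0 - 2 * q 1))
      0 q p = (vol d1 d2 q)⁻¹ *
        (2 * (1 / ((d1 : ℝ) + d2 - 1) * (p 0 + p 1) - p 0 / d1)) := by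
    simp only [pderivP, Ham_eq, Jform, Function.update_self,
      Function.update_of_ne (show (1 : Fin 2) ≠ 0 by decide)]
    have i := hasDerivAt_id (p 0)
    refine HasDerivAt.deriv ((((((i.add_const (p 1)).pow 2).const_mul _).sub
      ((i.pow 2).div_const _)).sub_const _).sub_const _ |>.const_mul _ |>.congr_deriv ?_)
    congr 1; simp; ring
  have hHp1 : pderivP (Ham d1 d2 fun q => A1 * Real.exp (-(q 1)) - A2 * Real.exp (q 0 - 2 * q 1))
      1 q p = (vol d1 d2 q)⁻¹ *
        (2 * (1 / ((d1 : ℝ) + d2 - 1) * (p 0 + p 1) - p 1 / d2)) := by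
    simp only [pderivP, Ham_eq, Jform, Function.update_self,
      Function.update_of_ne (show (0 : Fin 2) ≠ 1 by decide)]
    have i := hasDerivAt_id (p 1)
    refine HasDerivAt.deriv ((((((i.const_add (p 0)).pow 2).const_mul _).sub_const _).sub
      ((i.pow 2).div_const _)).sub_const _ |>.const_mul _ |>.congr_deriv ?_)
    congr 1; simp; ring
  rw [poisson, Fin.sum_univ_two, hFq, hFq, hFp0, hFp1, hHp0, hHp1,
    hHq 0 _ (hasDerivAt_potential_update_zero d1 d2 A1 A2 q),
    hHq 1 _ (hasDerivAt_potential_update_one d1 d2 A1 A2 q)] at h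
  refine mul_left_cancel₀ hv ?_
  linear_combination h

theorem exists_null_factorization {d1 d2 : ℕ} (hd1 : 2 ≤ d1) (hd2 : 0 < d2) :
    ∃ e₀ e₁ f₀ f₁ : ℝ, e₀ * f₁ - e₁ * f₀ ≠ 0 ∧
      e₀ * f₀ = 1 / ((d1 : ℝ) + d2 - 1) - 1 / d1 ∧ e₁ * f₁ = 1 / ((d1 : ℝ) + d2 - 1) - 1 / d2 ∧
      e₀ * f₁ + e₁ * f₀ = 2 * (1 / ((d1 : ℝ) + d2 - 1)) := by
  have h1 : (2 : ℝ) ≤ d1 := by exact_mod_cast hd1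
  have h2 : (1 : ℝ) ≤ d2 := by exact_mod_cast hd2
  have hm : (0 : ℝ) < (d1 : ℝ) + d2 - 1 := by linarith
  have hp : (0 : ℝ) < 1 / (d1 * d2 * ((d1 : ℝ) + d2 - 1)) := by positivity
  obtain ⟨B, hB⟩ : ∃ B, B = 1 / ((d1 : ℝ) + d2 - 1) := ⟨_, rfl⟩
  obtain ⟨C, hC⟩ : ∃ C, C = B - 1 / (d2 : ℝ) := ⟨_, rfl⟩
  have hC0 : C ≠ 0 := by
    rw [hC, hB, sub_ne_zero]
    exact (one_div_lt_one_div_of_lt (by linarith) (by linarith)).ne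
  have hs := Real.sq_sqrt hp.le
  have hs0 := Real.sqrt_pos.2 hp
  set δ := Real.sqrt (1 / (d1 * d2 * ((d1 : ℝ) + d2 - 1)))
  have hdisc : B ^ 2 - δ ^ 2 = (B - 1 / d1) * C := by
    rw [hs, hC, hB]
    field_simp
    ring
  refine ⟨B + δ, C, (B - δ) / C, 1, ?_, ?_, ?_, ?_⟩
  · rw [mul_div_cancel₀ _ hC0]
    intro h; linarith
  · rw [← hB, ← mul_div_assoc, div_eq_iff hC0]; linear_combination hdisc
  · rw [mul_one, ← hB, hC]
  · rw [mul_div_cancel₀ _ hC0, ← hB]; ring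

/-- Null coordinates in which the covectors `a`, `b` of the two exponentials of the potential
satisfy the non-degeneracy conditions of `trivial_of_bracket_null_coordinates`. -/
theorem null_components_nondegenerate {x y : ℝ} (h1 : 2 ≤ x) (h2 : 1 ≤ y) (h2' : y ≠ 2)
    (hne : 9 * x ≠ y * (x - 4)) {e₀ e₁ f₀ f₁ a₁ a₂ b₁ b₂ : ℝ}
    (hΔ : e₀ * f₁ - e₁ * f₀ ≠ 0)
    (h00 : e₀ * f₀ = 1 / (x + y - 1) - 1 / x) (h11 : e₁ * f₁ = 1 / (x + y - 1) - 1 / y)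
    (h01 : e₀ * f₁ + e₁ * f₀ = 2 * (1 / (x + y - 1)))
    (ha₁ : a₁ = e₀ * x + e₁ * (y - 1)) (ha₂ : a₂ = f₀ * x + f₁ * (y - 1))
    (hb₁ : b₁ = e₀ * (x + 1) + e₁ * (y - 2)) (hb₂ : b₂ = f₀ * (x + 1) + f₁ * (y - 2)) :
    a₁ ≠ b₁ ∧ a₂ ≠ b₂ ∧ a₁ ≠ 2 * b₁ ∧ a₂ ≠ 2 * b₂ ∧ b₁ ≠ 2 * a₁ ∧ b₂ ≠ 2 * a₂ ∧
      a₁ * b₂ - a₂ * b₁ ≠ 0 ∧ a₁ * b₂ + a₂ * b₁ ≠ 0 ∧ a₁ * a₂ ≠ b₁ * b₂ := by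
  have hm : x + y - 1 ≠ 0 := by linarith
  have hx0 : x ≠ 0 := by linarith
  have hy0 : y ≠ 0 := by linarith
  have haa : a₁ * a₂ = 1 - 1 / y := by
    have : a₁ * a₂ = e₀ * f₀ * x ^ 2 + e₁ * f₁ * (y - 1) ^ 2 +
      (e₀ * f₁ + e₁ * f₀) * x * (y - 1) := by rw [ha₁, ha₂]; ring
    rw [this, h00, h11, h01]; field_simp; ring
  have hbb : b₁ * b₂ = 1 - 1 / x - 4 / y := by
    have : b₁ * b₂ = e₀ * f₀ * (x + 1) ^ 2 + e₁ * f₁ * (y - 2) ^ 2 +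
      (e₀ * f₁ + e₁ * f₀) * (x + 1) * (y - 2) := by rw [hb₁, hb₂]; ring
    rw [this, h00, h11, h01]; field_simp; ring
  have hab : a₁ * b₂ + a₂ * b₁ = 2 * (1 - 2 / y) := by
    have : a₁ * b₂ + a₂ * b₁ = 2 * (e₀ * f₀ * x * (x + 1) + e₁ * f₁ * (y - 1) * (y - 2)) +
      (e₀ * f₁ + e₁ * f₀) * (x * (y - 2) + (x + 1) * (y - 1)) := by rw [ha₁, ha₂, hb₁, hb₂]; ring
    rw [this, h00, h11, h01]; field_simp; ring
  have hx' : 0 < 1 / x := by positivity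
  have hy' : 0 < 1 / y := by positivity
  have h4 : 4 / y = 4 * (1 / y) := by ring
  have k1 : (a₁ - b₁) * (a₂ - b₂) ≠ 0 := by
    have : (a₁ - b₁) * (a₂ - b₂) = -(1 / x + 1 / y) := by
      linear_combination haa + hbb - hab
    rw [this]; linarith
  have k2 : (a₁ - 2 * b₁) * (a₂ - 2 * b₂) ≠ 0 := by
    have : (a₁ - 2 * b₁) * (a₂ - 2 * b₂) = (y * (x - 4) - 9 * x) / (x * y) := by
      have : (a₁ - 2 * b₁) * (a₂ - 2 * b₂) =
          1 - 1 / y + 4 * (1 - 1 / x - 4 / y) - 2 * (2 * (1 - 2 / y)) := by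
        linear_combination haa + 4 * hbb - 2 * hab
      rw [this]; field_simp; ring
    rw [this]
    exact div_ne_zero (sub_ne_zero.2 hne.symm) (mul_ne_zero hx0 hy0)
  have k3 : (b₁ - 2 * a₁) * (b₂ - 2 * a₂) ≠ 0 := by
    have : (b₁ - 2 * a₁) * (b₂ - 2 * a₂) = (x - 1) / x := by
      have : (b₁ - 2 * a₁) * (b₂ - 2 * a₂) =
          4 * (1 - 1 / y) + (1 - 1 / x - 4 / y) - 2 * (2 * (1 - 2 / y)) := by
        linear_combination 4 * haa + hbb - 2 * hab
      rw [this]; field_simp; ring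
    rw [this]
    exact div_ne_zero (by linarith) hx0
  refine ⟨fun h => k1 (by rw [h]; ring), fun h => k1 (by rw [h]; ring),
    fun h => k2 (by rw [h]; ring), fun h => k2 (by rw [h]; ring),
    fun h => k3 (by rw [h]; ring), fun h => k3 (by rw [h]; ring), ?_, ?_, ?_⟩
  · have : a₁ * b₂ - a₂ * b₁ = -((e₀ * f₁ - e₁ * f₀) * (x + y - 1)) := by
      rw [ha₁, ha₂, hb₁, hb₂]; ring
    rw [this]
    exact neg_ne_zero.2 (mul_ne_zero hΔ hm)
  · have : a₁ * b₂ + a₂ * b₁ = 2 * (y - 2) / y := by rw [hab]; field_simp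
    rw [this]
    exact div_ne_zero (mul_ne_zero two_ne_zero (sub_ne_zero.2 h2')) hy0
  · rw [haa, hbb, h4]
    intro h; linarith

theorem differentiable_potential (d1 d2 : ℕ) (A1 A2 : ℝ) :
    Differentiable ℝ (potential d1 d2 A1 A2) := by
  unfold potential; fun_prop

/-- Dancer–Wang: for `S(q) = A₁e^{−q₂} − A₂e^{q₁−2q₂}` with `d₁ ≠ 1`, `d₂ ≠ 2` and
`9d₁ ≠ d₂(d₁−4)`, every quadratic-in-momenta first integral on `V_H` is trivial. -/
theorem quadratic_first_integral_trivial_case_ii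
    (d1 d2 : ℕ) (hd1pos : 0 < d1) (hd2pos : 0 < d2)
    (hd1 : d1 ≠ 1) (hd2 : d2 ≠ 2)
    (A1 A2 : ℝ) (hA1 : 0 < A1) (hA2 : 0 < A2)
    (hne : 9 * (d1 : ℝ) ≠ (d2 : ℝ) * ((d1 : ℝ) - 4))
    (S : (Fin 2 → ℝ) → ℝ)
    (hS : S = fun q => A1 * Real.exp (-(q 1)) - A2 * Real.exp (q 0 - 2 * q 1))
    (F20 F02 F11 F1 F2 F0 : (Fin 2 → ℝ) → ℝ)
    (hF20 : ContDiff ℝ 1 F20) (hF02 : ContDiff ℝ 1 F02) (hF11 : ContDiff ℝ 1 F11)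
    (hF1 : ContDiff ℝ 1 F1) (hF2 : ContDiff ℝ 1 F2) (hF0 : ContDiff ℝ 1 F0)
    (F : (Fin 2 → ℝ) → (Fin 2 → ℝ) → ℝ)
    (hF : F = fun q p => F20 q * (p 0) ^ 2 + F02 q * (p 1) ^ 2 + F11 q * (p 0) * (p 1) +
      F1 q * p 0 + F2 q * p 1 + F0 q)
    (hbracket : ∀ q p : Fin 2 → ℝ, Ham d1 d2 S q p = 0 → poisson F (Ham d1 d2 S) q p = 0) :
    ∃ (φ : (Fin 2 → ℝ) → ℝ) (c : ℝ), ContDiff ℝ 1 φ ∧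
      ∀ q p : Fin 2 → ℝ, F q p = φ q * Ham d1 d2 S q p + c := by
  have hd1' : 2 ≤ d1 := by omega
  obtain ⟨e₀, e₁, f₀, f₁, hΔ, h00, h11, h01⟩ := exists_null_factorization hd1' hd2pos
  obtain ⟨k1, k2, k3, k4, k5, k6, k7, k8, k9⟩ :=
    null_components_nondegenerate (x := d1) (y := d2) (by exact_mod_cast hd1')
      (by exact_mod_cast hd2pos) (by exact_mod_cast hd2) hne hΔ h00 h11 h01 rfl rfl rfl rfl
  obtain ⟨g₀, g₁, h₀, h₁, eg, eh, fg, fh, r00, r01, r10, r11⟩ : ∃ g₀ g₁ h₀ h₁ : ℝ,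
      e₀ * g₀ + e₁ * g₁ = 1 ∧ e₀ * h₀ + e₁ * h₁ = 0 ∧
      f₀ * g₀ + f₁ * g₁ = 0 ∧ f₀ * h₀ + f₁ * h₁ = 1 ∧
      g₀ * e₀ + h₀ * f₀ = 1 ∧ g₀ * e₁ + h₀ * f₁ = 0 ∧
      g₁ * e₀ + h₁ * f₀ = 0 ∧ g₁ * e₁ + h₁ * f₁ = 1 := by
    obtain ⟨i, hi⟩ : ∃ i, (e₀ * f₁ - e₁ * f₀) * i = 1 := ⟨_, mul_inv_cancel₀ hΔ⟩
    refine ⟨f₁ * i, -f₀ * i, -e₁ * i, e₀ * i, ?_, by ring, by ring, ?_, ?_, by ring, by ring, ?_⟩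
    all_goals linear_combination hi
  have hJ : ∀ p : Fin 2 → ℝ,
      Jform d1 d2 p = (e₀ * p 0 + e₁ * p 1) * (f₀ * p 0 + f₁ * p 1) := fun p => by
    rw [Jform]
    linear_combination -(p 0 ^ 2) * h00 - p 1 ^ 2 * h11 - p 0 * p 1 * h01
  subst hF hS
  have D20 := hF20.differentiable one_ne_zero
  have D02 := hF02.differentiable one_ne_zero
  have D11 := hF11.differentiable one_ne_zero
  have D1 := hF1.differentiable one_ne_zero
  have D2 := hF2.differentiable one_ne_zero
  have D0 := hF0.differentiable one_ne_zero
  obtain ⟨pt, hpt⟩ : ∃ pt : ℝ → ℝ → Fin 2 → ℝ,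
      pt = fun u w => ![u * e₀ + w * f₀, u * e₁ + w * f₁] := ⟨_, rfl⟩
  have hpt0 : ∀ u w, pt u w 0 = u * e₀ + w * f₀ := fun u w => by simp [hpt]
  have hpt1 : ∀ u w, pt u w 1 = u * e₁ + w * f₁ := fun u w => by simp [hpt]
  obtain ⟨D, hD⟩ : ∃ D : ((Fin 2 → ℝ) → ℝ) → Fin 2 → (Fin 2 → ℝ) → ℝ,
      D = fun G i q => fderiv ℝ G q (Pi.single i 1) := ⟨_, rfl⟩
  have du : ∀ {G : (Fin 2 → ℝ) → ℝ}, Differentiable ℝ G → ∀ u w, HasDerivAt (fun u => G (pt u w))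
      (e₀ * D G 0 (pt u w) + e₁ * D G 1 (pt u w)) u := fun hG u w => by
    rw [hpt, hD]; exact hasDerivAt_comp_line_left hG e₀ e₁ _ _ u
  have dw : ∀ {G : (Fin 2 → ℝ) → ℝ}, Differentiable ℝ G → ∀ u w, HasDerivAt (fun w => G (pt u w))
      (f₀ * D G 0 (pt u w) + f₁ * D G 1 (pt u w)) w := fun hG u w => by
    rw [hpt, hD]; exact hasDerivAt_comp_line_right hG f₀ f₁ _ _ w
  obtain ⟨X, hX⟩ : ∃ X : (Fin 2 → ℝ) → ℝ,
      X = fun q => Real.exp (d1 * q 0 + (d2 - 1) * q 1) := ⟨_, rfl⟩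
  obtain ⟨Y, hY⟩ : ∃ Y : (Fin 2 → ℝ) → ℝ,
      Y = fun q => Real.exp ((d1 + 1) * q 0 + (d2 - 2) * q 1) := ⟨_, rfl⟩
  have hXpt : ∀ u w, X (pt u w) =
      Real.exp ((e₀ * d1 + e₁ * (d2 - 1)) * u + (f₀ * d1 + f₁ * (d2 - 1)) * w) := fun u w => by
    simp only [hX, hpt0, hpt1]; ring_nf
  have hYpt : ∀ u w, Y (pt u w) = Real.exp ((e₀ * (d1 + 1) + e₁ * (d2 - 2)) * u +
      (f₀ * (d1 + 1) + f₁ * (d2 - 2)) * w) := fun u w => by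
    simp only [hY, hpt0, hpt1]; ring_nf
  have hP : ∀ q, potential d1 d2 A1 A2 q = A1 * X q - A2 * Y q := fun q => by
    rw [hX, hY]; rfl
  have hDP0 : ∀ q, D (potential d1 d2 A1 A2) 0 q = A1 * d1 * X q - A2 * (d1 + 1) * Y q :=
    fun q => by
      rw [hX, hY, hD]
      exact (hasDerivAt_comp_update_s3 (differentiable_potential d1 d2 A1 A2) q 0).unique
        (hasDerivAt_potential_update_zero d1 d2 A1 A2 q)
  have hDP1 : ∀ q, D (potential d1 d2 A1 A2) 1 q =
      A1 * (d2 - 1) * X q - A2 * (d2 - 2) * Y q := fun q => by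
    rw [hX, hY, hD]
    exact (hasDerivAt_comp_update_s3 (differentiable_potential d1 d2 A1 A2) q 1).unique
      (hasDerivAt_potential_update_one d1 d2 A1 A2 q)
  have DP := differentiable_potential d1 d2 A1 A2
  have key := trivial_of_bracket_null_coordinates hA1.ne' hA2.ne' k1 k2 k3 k4 k5 k6 k7 k8 k9
    (W := fun u w => potential d1 d2 A1 A2 (pt u w))
    (Wu := fun u w => e₀ * D (potential d1 d2 A1 A2) 0 (pt u w) +
      e₁ * D (potential d1 d2 A1 A2) 1 (pt u w))
    (Ww := fun u w => f₀ * D (potential d1 d2 A1 A2) 0 (pt u w) +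
      f₁ * D (potential d1 d2 A1 A2) 1 (pt u w))
    (fun u w => by simp only [hP, hXpt, hYpt])
    (fun u w => by simp only [hDP0, hDP1, hXpt, hYpt]; ring)
    (fun u w => by simp only [hDP0, hDP1, hXpt, hYpt]; ring)
    (α := fun u w => F20 (pt u w) * g₀ ^ 2 + F02 (pt u w) * g₁ ^ 2 + F11 (pt u w) * (g₀ * g₁))
    (γ := fun u w => F20 (pt u w) * h₀ ^ 2 + F02 (pt u w) * h₁ ^ 2 + F11 (pt u w) * (h₀ * h₁))
    (f := fun u w => F1 (pt u w) * g₀ + F2 (pt u w) * g₁)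
    (g := fun u w => F1 (pt u w) * h₀ + F2 (pt u w) * h₁)
    (k := fun u w => F0 (pt u w) + (F20 (pt u w) * (2 * g₀ * h₀) + F02 (pt u w) * (2 * g₁ * h₁) +
      F11 (pt u w) * (g₀ * h₁ + g₁ * h₀)) * potential d1 d2 A1 A2 (pt u w))
    (fun u w => (((du D20 u w).mul_const _).add ((du D02 u w).mul_const _)).add
      ((du D11 u w).mul_const _))
    (fun u w => (((dw D20 u w).mul_const _).add ((dw D02 u w).mul_const _)).add
      ((dw D11 u w).mul_const _))
    (fun u w => (((du D20 u w).mul_const _).add ((du D02 u w).mul_const _)).add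
      ((du D11 u w).mul_const _))
    (fun u w => (((dw D20 u w).mul_const _).add ((dw D02 u w).mul_const _)).add
      ((dw D11 u w).mul_const _))
    (fun u w => ((du D1 u w).mul_const _).add ((du D2 u w).mul_const _))
    (fun u w => ((dw D1 u w).mul_const _).add ((dw D2 u w).mul_const _))
    (fun u w => ((du D1 u w).mul_const _).add ((du D2 u w).mul_const _))
    (fun u w => ((dw D1 u w).mul_const _).add ((dw D2 u w).mul_const _))
    (fun u w => (du D0 u w).add (((((du D20 u w).mul_const _).add
      ((du D02 u w).mul_const _)).add ((du D11 u w).mul_const _)).mul (du DP u w)))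
    (fun u w => (dw D0 u w).add (((((dw D20 u w).mul_const _).add
      ((dw D02 u w).mul_const _)).add ((dw D11 u w).mul_const _)).mul (dw DP u w)))
    (fun u w ξ η hξη => by
      obtain ⟨p, hp⟩ : ∃ p : Fin 2 → ℝ, p = ![ξ * g₀ + η * h₀, ξ * g₁ + η * h₁] := ⟨_, rfl⟩
      have p0 : p 0 = ξ * g₀ + η * h₀ := by simp [hp]
      have p1 : p 1 = ξ * g₁ + η * h₁ := by simp [hp]
      have ep : e₀ * p 0 + e₁ * p 1 = ξ := by
        rw [p0, p1]; linear_combination ξ * eg + η * eh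
      have fp : f₀ * p 0 + f₁ * p 1 = η := by
        rw [p0, p1]; linear_combination ξ * fg + η * fh
      have hJp : Jform d1 d2 p = potential d1 d2 A1 A2 (pt u w) := by rw [hJ, ep, fp, hξη]
      have hb := bracket_polynomial_eq_zero d1 d2 A1 A2 D20 D02 D11 D1 D2 D0 (pt u w) p hJp
        (hbracket _ _ (by rw [Ham_eq, hJp, sub_self, mul_zero]))
        (fun G i => D G i (pt u w)) (fun G i => by rw [hD])
      have c0 : 2 * (1 / ((d1 : ℝ) + d2 - 1) * (p 0 + p 1) - p 0 / d1) = e₀ * η + f₀ * ξ := by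
        rw [← ep, ← fp]; linear_combination -2 * p 0 * h00 - p 1 * h01
      have c1 : 2 * (1 / ((d1 : ℝ) + d2 - 1) * (p 0 + p 1) - p 1 / d2) = e₁ * η + f₁ * ξ := by
        rw [← ep, ← fp]; linear_combination -2 * p 1 * h11 - p 0 * h01
      have w0 := hDP0 (pt u w)
      have w1 := hDP1 (pt u w)
      simp only [hX, hY] at w0 w1
      rw [c0, c1, ← w0, ← w1, p0, p1] at hb
      generalize D (potential d1 d2 A1 A2) 0 (pt u w) = W0 at *
      generalize D (potential d1 d2 A1 A2) 1 (pt u w) = W1 at *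
      have hW0 : g₀ * (e₀ * W0 + e₁ * W1) + h₀ * (f₀ * W0 + f₁ * W1) = W0 := by
        linear_combination W0 * r00 + W1 * r01
      have hW1 : g₁ * (e₀ * W0 + e₁ * W1) + h₁ * (f₀ * W0 + f₁ * W1) = W1 := by
        linear_combination W0 * r10 + W1 * r11
      generalize e₀ * W0 + e₁ * W1 = Wu at *
      generalize f₀ * W0 + f₁ * W1 = Ww at *
      rw [← hW0, ← hW1] at hb
      simp only [Pi.add_apply]
      rw [← hξη]
      linear_combination hb)
  have hsurj : ∀ q : Fin 2 → ℝ, ∃ u w, pt u w = q := fun q =>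
    ⟨g₀ * q 0 + g₁ * q 1, h₀ * q 0 + h₁ * q 1, by
      ext i
      fin_cases i
      · simp only [Fin.zero_eta, hpt0]; linear_combination q 0 * r00 + q 1 * r10
      · simp only [Fin.mk_one, hpt1]; linear_combination q 0 * r01 + q 1 * r11⟩
  refine ⟨fun q => (F20 q * (2 * g₀ * h₀) + F02 q * (2 * g₁ * h₁) + F11 q * (g₀ * h₁ + g₁ * h₀)) *
    vol d1 d2 q, F0 (pt 0 0) + (F20 (pt 0 0) * (2 * g₀ * h₀) + F02 (pt 0 0) * (2 * g₁ * h₁) +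
      F11 (pt 0 0) * (g₀ * h₁ + g₁ * h₀)) * potential d1 d2 A1 A2 (pt 0 0), ?_, fun q p => ?_⟩
  · exact (((hF20.mul contDiff_const).add (hF02.mul contDiff_const)).add
      (hF11.mul contDiff_const)).mul (contDiff_vol d1 d2)
  · obtain ⟨u, w, rfl⟩ := hsurj q
    obtain ⟨zα, zγ, zf, zg, zk⟩ := key u w
    rw [Ham_eq, ← mul_assoc, mul_assoc _ _ (vol d1 d2 _)⁻¹,
      mul_inv_cancel₀ (vol_pos d1 d2 _).ne', mul_one, hJ, ← zk]
    obtain ⟨ξ, hξ⟩ : ∃ ξ, ξ = e₀ * p 0 + e₁ * p 1 := ⟨_, rfl⟩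
    obtain ⟨η, hη⟩ : ∃ η, η = f₀ * p 0 + f₁ * p 1 := ⟨_, rfl⟩
    have p0 : p 0 = ξ * g₀ + η * h₀ := by
      rw [hξ, hη]; linear_combination -p 0 * r00 - p 1 * r01
    have p1 : p 1 = ξ * g₁ + η * h₁ := by
      rw [hξ, hη]; linear_combination -p 0 * r10 - p 1 * r11
    beta_reduce
    rw [← hξ, ← hη, p0, p1]
    linear_combination ξ ^ 2 * zα + η ^ 2 * zγ + ξ * zf + η * zg
end
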